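/- arXiv:2001.09970 — 10 statements merged into one kernel-verified Lean document; each statement's English description precedes it below -/
import Mathlib

section
/- Under these hypotheses, every conjugacy class of G consisting of nonidentity p-regular elements has defect zero; that is, for every p-regular element g ≠ 1 of G, the order of the centralizer C_G(g) is not divisible by p. -/
theorem aux_mem {G : Type*} [Group G] (H : Subgroup G) [H.Normal] (x : G)
    (h : Nat.Coprime (orderOf x) H.index) : x ∈ H := by
  have h1 : orderOf (QuotientGroup.mk' H x) ∣ orderOf x := orderOf_map_dvd _ x
  have h2 : orderOf (QuotientGroup.mk' H x) ∣ H.index := orderOf_dvd_natCard _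
  have h3 := Nat.eq_one_of_dvd_coprimes h h1 h2
  rw [orderOf_eq_one_iff] at h3
  exact (QuotientGroup.eq_one_iff x).1 h3

/-- Hypotheses: `G` is a finite group with normal Sylow `p`-subgroup `D`, `E` is a
`p'`-complement acting faithfully on `D`, `k(G) - ℓ_p(G) = 2`, and the centralizer of
every element of `D` of order `p` is `p`-nilpotent. -/
theorem stmt_0 {p : ℕ} (hp : p.Prime) {G : Type*} [Group G] [Fintype G]
    (D E : Subgroup G)
    (hDn : D.Normal)
    (hDpgrp : IsPGroup p D)
    (hDsyl : ¬ p ∣ D.index)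
    (hEp' : Nat.Coprime (Nat.card E) p)
    (hDEinf : D ⊓ E = ⊥)
    (hDEsup : D ⊔ E = ⊤)
    (hfaith : ∀ y ∈ E, (∀ d ∈ D, y * d = d * y) → y = 1)
    (hkl : Nat.card (ConjClasses G) =
      Nat.card {c : ConjClasses G // ∀ g ∈ c.carrier, ¬ p ∣ orderOf g} + 2)
    (hnilp : ∀ u : G, u ∈ D → orderOf u = p →
      ∃ N : Subgroup (Subgroup.centralizer ({u} : Set G)), N.Normal ∧
        Nat.Coprime (Nat.card N) p ∧ ∃ n : ℕ, N.index = p ^ n) :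
    ∀ g : G, g ≠ 1 → ¬ p ∣ orderOf g → ¬ p ∣ Nat.card (Subgroup.centralizer ({g} : Set G)) := by
  classical
  intro g hg1 hgp hdvd
  haveI : Fact p.Prime := ⟨hp⟩
  obtain ⟨u', hu'⟩ := exists_prime_orderOf_dvd_card' p hdvd
  obtain ⟨u, huc⟩ := u'
  have hu : orderOf u = p := by
    rw [← hu', ← Subgroup.orderOf_coe]
  have hug : Commute u g := (Subgroup.mem_centralizer_singleton_iff.1 huc)
  have huD : u ∈ D := aux_mem D u (by rw [hu]; exact (Nat.Prime.coprime_iff_not_dvd hp).2 hDsyl)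
  have hDreg : ∀ x ∈ D, x ≠ 1 → p ∣ orderOf x := by
    intro x hx hx1
    obtain ⟨k, hk⟩ := hDpgrp ⟨x, hx⟩
    have hk' : x ^ p ^ k = 1 := by simpa using congrArg Subtype.val hk
    obtain ⟨m, -, hm⟩ := (Nat.dvd_prime_pow hp).1 (orderOf_dvd_of_pow_eq_one hk')
    rcases Nat.eq_zero_or_pos m with rfl | hm0
    · rw [pow_zero, orderOf_eq_one_iff] at hm; exact absurd hm hx1
    · rw [hm]; exact dvd_pow_self p hm0.ne'
  have hgD : g ∉ D := fun h => hgp (hDreg g h hg1)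
  have hugD : u * g ∉ D := fun h => hgD ((D.mul_mem_cancel_left huD).1 h)
  have hu1 : u ≠ 1 := by
    rintro rfl
    rw [orderOf_one] at hu
    exact hp.one_lt.ne hu
  have hugp : p ∣ orderOf (u * g) := by
    rw [hug.orderOf_mul_eq_mul_orderOf_of_coprime
      (by rw [hu]; exact (Nat.Prime.coprime_iff_not_dvd hp).2 hgp), hu]
    exact dvd_mul_right _ _
  have hcard : Nat.card {c : ConjClasses G // ¬ ∀ g ∈ c.carrier, ¬ p ∣ orderOf g} = 2 := by
    have := Fintype.card_subtype_compl (fun c : ConjClasses G => ∀ g ∈ c.carrier, ¬ p ∣ orderOf g)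
    rw [Nat.card_eq_fintype_card, this]
    rw [Nat.card_eq_fintype_card, Nat.card_eq_fintype_card] at hkl
    omega
  have hsing : ∀ x : G, p ∣ orderOf x →
      ¬ ∀ g ∈ (ConjClasses.mk x).carrier, ¬ p ∣ orderOf g := fun x hx h =>
    h x ConjClasses.mem_carrier_mk hx
  have hconjD : ∀ x y : G, x ∈ D → IsConj x y → y ∈ D := by
    intro x y hx hxy
    obtain ⟨c, rfl⟩ := isConj_iff.1 hxy
    exact hDn.conj_mem x hx c
  have hall : ∀ x ∈ D, x ≠ 1 → ∀ y ∈ D, y ≠ 1 → IsConj x y := by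
    intro x hx hx1 y hy hy1
    by_contra hxy
    have h3 : Fintype.card (Fin 3) ≤ Fintype.card
        {c : ConjClasses G // ¬ ∀ g ∈ c.carrier, ¬ p ∣ orderOf g} := by
      have hle := Finset.card_le_univ ({⟨ConjClasses.mk x, hsing x (hDreg x hx hx1)⟩,
        ⟨ConjClasses.mk y, hsing y (hDreg y hy hy1)⟩, ⟨ConjClasses.mk (u*g), hsing _ hugp⟩} :
        Finset {c : ConjClasses G // ¬ ∀ g ∈ c.carrier, ¬ p ∣ orderOf g})
      rw [Finset.card_eq_three.2 ⟨_, _, _, ?_, ?_, ?_, rfl⟩] at hle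
      · simpa using hle
      · intro h
        exact hxy (ConjClasses.mk_eq_mk_iff_isConj.1 (congrArg Subtype.val h))
      · intro h
        exact hugD (hconjD x _ hx (ConjClasses.mk_eq_mk_iff_isConj.1 (congrArg Subtype.val h)))
      · intro h
        exact hugD (hconjD y _ hy (ConjClasses.mk_eq_mk_iff_isConj.1 (congrArg Subtype.val h)))
    rw [← Nat.card_eq_fintype_card (α := {c : ConjClasses G // _}), hcard] at h3
    simp at h3
  haveI : Nontrivial D := ⟨⟨⟨u, huD⟩, 1, fun h => hu1 (congrArg Subtype.val h)⟩⟩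
  haveI := hDpgrp.center_nontrivial
  obtain ⟨z, hz1⟩ := exists_ne (1 : Subgroup.center D)
  have hab : ∀ x ∈ D, ∀ y ∈ D, x * y = y * x := by
    intro x hx y hy
    by_cases hx1 : x = 1
    · simp [hx1]
    have hz1' : ((z : D) : G) ≠ 1 := fun h => hz1 (Subtype.ext (Subtype.ext h))
    obtain ⟨c, hc⟩ := isConj_iff.1 (hall z (z : D).2 hz1' x hx hx1)
    have hy' : c⁻¹ * y * c ∈ D := by simpa using hDn.conj_mem y hy c⁻¹
    have hcom : (c⁻¹ * y * c) * (z : D) = (z : D) * (c⁻¹ * y * c) := by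
      simpa using congrArg Subtype.val (Subgroup.mem_center_iff.1 z.2 ⟨_, hy'⟩)
    rw [← hc]
    have : c * ((c⁻¹ * y * c) * (z : D)) * c⁻¹ = c * ((z : D) * (c⁻¹ * y * c)) * c⁻¹ := by
      rw [hcom]
    simpa [mul_assoc] using this.symm
  obtain ⟨N, hN, hNp, n, hn⟩ := hnilp u huD hu
  have hgc : g ∈ Subgroup.centralizer ({u} : Set G) :=
    Subgroup.mem_centralizer_singleton_iff.2 hug.symm
  have hgN : (⟨g, hgc⟩ : Subgroup.centralizer ({u} : Set G)) ∈ N := by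
    apply aux_mem
    rw [hn, Subgroup.orderOf_mk]
    exact ((Nat.Prime.coprime_iff_not_dvd hp).2 hgp).symm.pow_right n
  have hgcent : ∀ d ∈ D, g * d = d * g := by
    intro d hd
    have hdc : d ∈ Subgroup.centralizer ({u} : Set G) :=
      Subgroup.mem_centralizer_singleton_iff.2 (hab d hd u huD)
    set w : Subgroup.centralizer ({u} : Set G) := ⟨g, hgc⟩ * (⟨d, hdc⟩ * ⟨g, hgc⟩⁻¹ * ⟨d, hdc⟩⁻¹)
      with hw
    have hwN : w ∈ N := N.mul_mem hgN (hN.conj_mem _ (N.inv_mem hgN) _)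
    have hwv : (w : G) = g * d * g⁻¹ * d⁻¹ := by simp [hw, mul_assoc]
    have hwD : (w : G) ∈ D := by
      rw [hwv]
      exact D.mul_mem (hDn.conj_mem d hd g) (D.inv_mem hd)
    have hw1 : (w : G) = 1 := by
      by_contra h
      have h1 := hDreg _ hwD h
      rw [Subgroup.orderOf_coe] at h1
      exact (Nat.Prime.coprime_iff_not_dvd hp).1 hNp.symm
        (h1.trans (Subgroup.orderOf_dvd_natCard N hwN))
    rw [hwv] at hw1
    rw [mul_inv_eq_one, mul_inv_eq_iff_eq_mul] at hw1
    exact hw1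
  obtain ⟨d, hd, e, he, hde⟩ := Subgroup.mem_sup_of_normal_left.1
    (show g ∈ D ⊔ E by rw [hDEsup]; trivial)
  have he1 : e = 1 := by
    apply hfaith e he
    intro x hx
    have h1 := hgcent x hx
    rw [← hde] at h1
    have h2 : d * (e * x) = d * (x * e) := by
      rw [← mul_assoc, h1, ← mul_assoc, ← mul_assoc, hab x hx d hd]
    exact mul_left_cancel h2
  apply hgD
  rw [← hde, he1, mul_one]
  exact hd
end

section
/- Under these hypotheses, E acts semi-regularly (freely) on D ∖ {1}; that is, for every nonidentity element v of D, the only element y of E commuting with v is y = 1. -/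
/-- Hypotheses: `G` is a finite group with normal Sylow `p`-subgroup `D`, `E` is a
`p'`-complement acting faithfully on `D`, `k(G) - ℓ_p(G) = 2`, and the centralizer of
every element of `D` of order `p` is `p`-nilpotent. -/
theorem stmt_1 {p : ℕ} (hp : p.Prime) {G : Type*} [Group G] [Fintype G]
    (D E : Subgroup G)
    (hDn : D.Normal)
    (hDpgrp : IsPGroup p D)
    (hDsyl : ¬ p ∣ D.index)
    (hEp' : Nat.Coprime (Nat.card E) p)
    (hDEinf : D ⊓ E = ⊥)
    (hDEsup : D ⊔ E = ⊤)
    (hfaith : ∀ y ∈ E, (∀ d ∈ D, y * d = d * y) → y = 1)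
    (hkl : Nat.card (ConjClasses G) =
      Nat.card {c : ConjClasses G // ∀ g ∈ c.carrier, ¬ p ∣ orderOf g} + 2)
    (hnilp : ∀ u : G, u ∈ D → orderOf u = p →
      ∃ N : Subgroup (Subgroup.centralizer ({u} : Set G)), N.Normal ∧
        Nat.Coprime (Nat.card N) p ∧ ∃ n : ℕ, N.index = p ^ n) :
    ∀ v ∈ D, v ≠ 1 → ∀ y ∈ E, y * v = v * y → y = 1 := by
  classical
  intro v hv hv1 y hy hyv
  by_contra hy1
  have : Fact p.Prime := ⟨hp⟩
  have hpow : ∀ d ∈ D, ∃ k : ℕ, orderOf d = p ^ k := by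
    intro d hd
    obtain ⟨k, hk⟩ := hDpgrp ⟨d, hd⟩
    have hk' : d ^ p ^ k = 1 := by simpa using congrArg Subtype.val hk
    obtain ⟨m, -, hm⟩ := (Nat.dvd_prime_pow hp).1 (orderOf_dvd_of_pow_eq_one hk')
    exact ⟨m, hm⟩
  have hpdvd : ∀ d ∈ D, d ≠ 1 → p ∣ orderOf d := by
    intro d hd hd1
    obtain ⟨k, hk⟩ := hpow d hd
    rcases Nat.eq_zero_or_pos k with h0 | h0
    · subst h0
      exact absurd (orderOf_eq_one_iff.1 (by simpa using hk)) hd1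
    · rw [hk]
      exact dvd_pow_self p h0.ne'
  have hycop : (orderOf y).Coprime p :=
    hEp'.coprime_dvd_left (Subgroup.orderOf_dvd_natCard E hy)
  have hvy : p ∣ orderOf (v * y) := by
    have hcop : (orderOf v).Coprime (orderOf y) := by
      obtain ⟨k, hk⟩ := hpow v hv
      rw [hk]
      exact (hycop.pow_right k).symm
    have hc : Commute v y := hyv.symm
    rw [hc.orderOf_mul_eq_mul_orderOf_of_coprime hcop]
    exact (hpdvd v hv hv1).mul_right _
  have hvyD : v * y ∉ D := by
    intro h
    have h2 : y ∈ D := by simpa using D.mul_mem (D.inv_mem hv) h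
    have h3 : y ∈ D ⊓ E := ⟨h2, hy⟩
    rw [hDEinf] at h3
    exact hy1 (Subgroup.mem_bot.1 h3)
  have hconj : ∀ u ∈ D, u ≠ 1 → IsConj u v := by
    intro u hu hu1
    by_contra hnc
    have hD : ∀ a ∈ D, ConjClasses.mk a ≠ ConjClasses.mk (v * y) := by
      intro a ha h
      obtain ⟨g, hg⟩ := isConj_iff.1 (ConjClasses.mk_eq_mk_iff_isConj.1 h)
      exact hvyD (hg ▸ hDn.conj_mem a ha g)
    have huv : ConjClasses.mk u ≠ ConjClasses.mk v := fun h =>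
      hnc (ConjClasses.mk_eq_mk_iff_isConj.1 h)
    have hsing : ∀ a : G, p ∣ orderOf a →
        ¬ ∀ g ∈ (ConjClasses.mk a).carrier, ¬ p ∣ orderOf g :=
      fun a ha h => h a ConjClasses.mem_carrier_mk ha
    have hsub := Fintype.card_subtype_compl
      (fun c : ConjClasses G => ∀ g ∈ c.carrier, ¬ p ∣ orderOf g)
    rw [Nat.card_eq_fintype_card, Nat.card_eq_fintype_card] at hkl
    have h2 : Fintype.card {c : ConjClasses G // ¬ ∀ g ∈ c.carrier, ¬ p ∣ orderOf g} = 2 := by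
      omega
    rw [Fintype.card_subtype] at h2
    have h3 : ({ConjClasses.mk u, ConjClasses.mk v, ConjClasses.mk (v * y)} :
        Finset (ConjClasses G)).card = 3 :=
      Finset.card_eq_three.2 ⟨_, _, _, huv, hD u hu, hD v hv, rfl⟩
    have h4 := Finset.card_le_card (s := {ConjClasses.mk u, ConjClasses.mk v,
        ConjClasses.mk (v * y)}) (t := Finset.univ.filter (fun c : ConjClasses G =>
          ¬ ∀ g ∈ c.carrier, ¬ p ∣ orderOf g)) (by
      intro c hc
      rw [Finset.mem_filter]
      refine ⟨Finset.mem_univ _, ?_⟩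
      simp only [Finset.mem_insert, Finset.mem_singleton] at hc
      rcases hc with rfl | rfl | rfl
      · exact hsing _ (hpdvd u hu hu1)
      · exact hsing _ (hpdvd v hv hv1)
      · exact hsing _ hvy)
    omega
  have hvp : orderOf v = p := by
    have hd := hpdvd v hv hv1
    have ho : orderOf (v ^ (orderOf v / p)) = p :=
      orderOf_pow_orderOf_div (orderOf_pos v).ne' hd
    have hne : v ^ (orderOf v / p) ≠ 1 := by
      intro h
      rw [h, orderOf_one] at ho
      exact hp.one_lt.ne ho
    obtain ⟨g, hg⟩ := isConj_iff.1 (hconj _ (D.pow_mem hv _) hne)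
    have := MulEquiv.orderOf_eq (MulAut.conj g) (v ^ (orderOf v / p))
    rw [MulAut.conj_apply] at this
    rw [ho, hg] at this
    exact this
  have hvcen : ∀ d ∈ D, v * d = d * v := by
    have : Nontrivial D := ⟨⟨⟨v, hv⟩, 1, fun h => hv1 (congrArg Subtype.val h)⟩⟩
    have := hDpgrp.center_nontrivial
    obtain ⟨⟨⟨z, hzD⟩, hzc⟩, hz1⟩ := exists_ne (1 : Subgroup.center D)
    have hz : z ≠ 1 := by
      rintro rfl
      exact hz1 rfl
    obtain ⟨g, hg⟩ := isConj_iff.1 (hconj z hzD hz)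
    intro d hd
    have hd' : g⁻¹ * d * g ∈ D := by simpa using hDn.conj_mem d hd g⁻¹
    have hc := congrArg Subtype.val (Subgroup.mem_center_iff.1 hzc ⟨_, hd'⟩)
    simp only [Subgroup.coe_mul] at hc
    rw [← hg]
    calc g * z * g⁻¹ * d = g * (z * (g⁻¹ * d * g)) * g⁻¹ := by group
      _ = g * ((g⁻¹ * d * g) * z) * g⁻¹ := by rw [hc]
      _ = d * (g * z * g⁻¹) := by group
  obtain ⟨N, hN, hNc, n, hNi⟩ := hnilp v hv hvp
  have hyC : y ∈ Subgroup.centralizer ({v} : Set G) :=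
    Subgroup.mem_centralizer_singleton_iff.2 hyv
  have hyN : (⟨y, hyC⟩ : Subgroup.centralizer ({v} : Set G)) ∈ N := by
    rw [← QuotientGroup.eq_one_iff, ← orderOf_eq_one_iff]
    have h1 : orderOf (QuotientGroup.mk (s := N) ⟨y, hyC⟩) ∣ orderOf y := by
      have := orderOf_map_dvd (QuotientGroup.mk' N) ⟨y, hyC⟩
      rwa [Subgroup.orderOf_mk] at this
    have h2 : orderOf (QuotientGroup.mk (s := N) ⟨y, hyC⟩) ∣ p ^ n := by
      rw [← hNi]
      exact orderOf_dvd_natCard _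
    exact Nat.eq_one_of_dvd_coprimes (hycop.pow_right n) h1 h2
  apply hy1
  apply hfaith y hy
  intro d hd
  have hdC : d ∈ Subgroup.centralizer ({v} : Set G) :=
    Subgroup.mem_centralizer_singleton_iff.2 (hvcen d hd).symm
  have hcN : (⟨y, hyC⟩ * (⟨d, hdC⟩ * ⟨y, hyC⟩⁻¹ * ⟨d, hdC⟩⁻¹) :
      Subgroup.centralizer ({v} : Set G)) ∈ N :=
    N.mul_mem hyN (hN.conj_mem _ (N.inv_mem hyN) _)
  have hcD : y * (d * y⁻¹ * d⁻¹) ∈ D := by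
    have := D.mul_mem (hDn.conj_mem d hd y) (D.inv_mem hd)
    simpa [mul_assoc] using this
  have ho1 := Subgroup.orderOf_dvd_natCard N hcN
  rw [← Subgroup.orderOf_coe] at ho1
  simp only [Subgroup.coe_mul, Subgroup.coe_inv] at ho1
  obtain ⟨k, hk⟩ := hpow _ hcD
  have hone : orderOf (y * (d * y⁻¹ * d⁻¹)) = 1 :=
    Nat.eq_one_of_dvd_coprimes (hNc.pow_right k) ho1 hk.dvd
  rw [orderOf_eq_one_iff] at hone
  have : y * d = (y * (d * y⁻¹ * d⁻¹)) * (d * y) := by group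
  rw [this, hone, one_mul]
end

section
/- Under these hypotheses, the set of all nonidentity p-regular elements of G coincides with the set { v·y : v ∈ D, y ∈ E, y ≠ 1 } of products of an element of D with a nonidentity element of E. -/
/-- A `p`-power-torsion element lies in a normal subgroup of index prime to `p`. -/
theorem aux_mem_of_pow {p : ℕ} (hp : p.Prime) {G : Type*} [Group G]
    (D : Subgroup G) (hDn : D.Normal) (hDsyl : ¬ p ∣ D.index) (g : G) (k : ℕ)
    (h : g ^ (p ^ k) = 1) : g ∈ D := by
  have h1 : (QuotientGroup.mk g : G ⧸ D) ^ (p ^ k) = 1 := by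
    rw [← QuotientGroup.mk_pow, h]; rfl
  have h2 : (QuotientGroup.mk g : G ⧸ D) ^ D.index = 1 := by
    rw [Subgroup.index]; exact pow_card_eq_one'
  have hc : Nat.Coprime (p ^ k) D.index :=
    Nat.Coprime.pow_left k ((Nat.Prime.coprime_iff_not_dvd hp).2 hDsyl)
  have h3 : orderOf (QuotientGroup.mk g : G ⧸ D) = 1 :=
    Nat.eq_one_of_dvd_coprimes hc (orderOf_dvd_of_pow_eq_one h1) (orderOf_dvd_of_pow_eq_one h2)
  rw [orderOf_eq_one_iff] at h3
  exact (QuotientGroup.eq_one_iff g).1 h3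

/-- An element of coprime order lies in a normal subgroup of `p`-power index. -/
theorem aux_mem_of_index {p : ℕ} (hp : p.Prime) {G : Type*} [Group G]
    (N : Subgroup G) (hN : N.Normal) (n : ℕ) (hi : N.index = p ^ n) (g : G)
    (h : ¬ p ∣ orderOf g) : g ∈ N := by
  have h1 : (QuotientGroup.mk g : G ⧸ N) ^ (orderOf g) = 1 := by
    rw [← QuotientGroup.mk_pow, pow_orderOf_eq_one]; rfl
  have h2 : (QuotientGroup.mk g : G ⧸ N) ^ N.index = 1 := by
    rw [Subgroup.index]; exact pow_card_eq_one'
  rw [hi] at h2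
  have hc : Nat.Coprime (p ^ n) (orderOf g) :=
    Nat.Coprime.pow_left n ((Nat.Prime.coprime_iff_not_dvd hp).2 h)
  have h3 : orderOf (QuotientGroup.mk g : G ⧸ N) = 1 :=
    Nat.eq_one_of_dvd_coprimes hc (orderOf_dvd_of_pow_eq_one h2) (orderOf_dvd_of_pow_eq_one h1)
  rw [orderOf_eq_one_iff] at h3
  exact (QuotientGroup.eq_one_iff g).1 h3

theorem aux_reg_in_D {p : ℕ} (hp : p.Prime) {G : Type*} [Group G]
    (D : Subgroup G) (hD : IsPGroup p D) (g : G) (hg : g ∈ D)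
    (h : ¬ p ∣ orderOf g) : g = 1 := by
  obtain ⟨k, hk⟩ := hD ⟨g, hg⟩
  have hk' : g ^ (p ^ k) = 1 := by simpa using congrArg Subtype.val hk
  have hc : Nat.Coprime (p ^ k) (orderOf g) :=
    Nat.Coprime.pow_left k ((Nat.Prime.coprime_iff_not_dvd hp).2 h)
  have h3 : orderOf g = 1 :=
    Nat.eq_one_of_dvd_coprimes hc (orderOf_dvd_of_pow_eq_one hk') dvd_rfl
  exact orderOf_eq_one_iff.1 h3

/-- If there are exactly two non-regular classes, and `u, z` are non-regular in `D`
and `g` is non-regular outside `D`, then `u` and `z` are conjugate. -/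
theorem aux_conj {p : ℕ} {G : Type*} [Group G] [Fintype G]
    (D : Subgroup G) (hDn : D.Normal)
    (hkl : Nat.card (ConjClasses G) =
      Nat.card {c : ConjClasses G // ∀ g ∈ c.carrier, ¬ p ∣ orderOf g} + 2)
    (u z g : G) (hu : u ∈ D) (hz : z ∈ D) (hg : g ∉ D)
    (hu' : p ∣ orderOf u) (hz' : p ∣ orderOf z) (hg' : p ∣ orderOf g) : IsConj z u := by
  classical
  by_contra hne
  set S : Set (ConjClasses G) := {c | ∀ g ∈ c.carrier, ¬ p ∣ orderOf g} with hS
  have h1 : S.ncard + Sᶜ.ncard = Nat.card (ConjClasses G) := Set.ncard_add_ncard_compl S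
  have h2 : Nat.card {c : ConjClasses G // ∀ g ∈ c.carrier, ¬ p ∣ orderOf g} = S.ncard := rfl
  have h3 : Sᶜ.ncard = 2 := by omega
  have hmem : ∀ w : G, p ∣ orderOf w → ConjClasses.mk w ∈ Sᶜ := by
    intro w hw hh
    exact hh w ConjClasses.mem_carrier_mk hw
  have hD : ∀ w ∈ D, ConjClasses.mk w ≠ ConjClasses.mk g := by
    intro w hw hh
    rw [ConjClasses.mk_eq_mk_iff_isConj, isConj_iff] at hh
    obtain ⟨c, rfl⟩ := hh
    exact hg (hDn.conj_mem w hw c)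
  have h4 : 2 < Sᶜ.ncard := by
    rw [Set.two_lt_ncard_iff]
    refine ⟨ConjClasses.mk z, ConjClasses.mk u, ConjClasses.mk g, hmem _ hz', hmem _ hu',
      hmem _ hg', ?_, hD _ hz, hD _ hu⟩
    rw [Ne, ConjClasses.mk_eq_mk_iff_isConj]
    exact hne
  omega

/-- Hypotheses: `G` is a finite group with normal Sylow `p`-subgroup `D`, `E` is a
`p'`-complement acting faithfully on `D`, `k(G) - ℓ_p(G) = 2`, and the centralizer of
every element of `D` of order `p` is `p`-nilpotent. -/
theorem stmt_2 {p : ℕ} (hp : p.Prime) {G : Type*} [Group G] [Fintype G]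
    (D E : Subgroup G)
    (hDn : D.Normal)
    (hDpgrp : IsPGroup p D)
    (hDsyl : ¬ p ∣ D.index)
    (hEp' : Nat.Coprime (Nat.card E) p)
    (hDEinf : D ⊓ E = ⊥)
    (hDEsup : D ⊔ E = ⊤)
    (hfaith : ∀ y ∈ E, (∀ d ∈ D, y * d = d * y) → y = 1)
    (hkl : Nat.card (ConjClasses G) =
      Nat.card {c : ConjClasses G // ∀ g ∈ c.carrier, ¬ p ∣ orderOf g} + 2)
    (hnilp : ∀ u : G, u ∈ D → orderOf u = p →
      ∃ N : Subgroup (Subgroup.centralizer ({u} : Set G)), N.Normal ∧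
        Nat.Coprime (Nat.card N) p ∧ ∃ n : ℕ, N.index = p ^ n) :
    {g : G | g ≠ 1 ∧ ¬ p ∣ orderOf g} = {g : G | ∃ v ∈ D, ∃ y ∈ E, y ≠ 1 ∧ g = v * y} := by
  haveI : Fact p.Prime := ⟨hp⟩
  have hprod : ∀ g : G, ∃ v ∈ D, ∃ y ∈ E, g = v * y := by
    intro g
    have : g ∈ D ⊔ E := by rw [hDEsup]; trivial
    rw [Subgroup.mem_sup_of_normal_left] at this
    obtain ⟨v, hv, y, hy, h⟩ := this
    exact ⟨v, hv, y, hy, h.symm⟩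
  ext g
  simp only [Set.mem_setOf_eq]
  constructor
  · rintro ⟨hg1, hgp⟩
    obtain ⟨v, hv, y, hy, rfl⟩ := hprod g
    refine ⟨v, hv, y, hy, ?_, rfl⟩
    rintro rfl
    rw [mul_one] at hg1 hgp
    exact hg1 (aux_reg_in_D hp D hDpgrp v hv hgp)
  rintro ⟨v, hv, y, hy, hy1, hgvy⟩
  have hgD : g ∉ D := by
    intro hg
    have : y ∈ D ⊓ E := ⟨by
      have h := D.mul_mem (D.inv_mem hv) hg
      rwa [hgvy, inv_mul_cancel_left] at h, hy⟩
    rw [hDEinf] at this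
    exact hy1 (Subgroup.mem_bot.1 this)
  refine ⟨fun h => hgD (h ▸ D.one_mem), fun hpg => ?_⟩
  have hpos : 0 < orderOf g := orderOf_pos g
  obtain ⟨a, m, hm, hn⟩ := Nat.exists_eq_pow_mul_and_not_dvd hpos.ne' p hp.ne_one
  set x := g ^ (p ^ a) with hx
  have hxo : orderOf x = m := by
    rw [hx, orderOf_pow_of_dvd (pow_ne_zero _ hp.ne_zero) (hn ▸ dvd_mul_right _ _), hn,
      Nat.mul_div_cancel_left _ (pow_pos hp.pos _)]
  have hx1 : x ≠ 1 := fun h => hgD (aux_mem_of_pow hp D hDn hDsyl g a h)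
  set u := g ^ (orderOf g / p) with hu
  have huo : orderOf u = p := orderOf_pow_orderOf_div hpos.ne' hpg
  have huD : u ∈ D := aux_mem_of_pow hp D hDn hDsyl u 1 (by
    rw [pow_one]; exact orderOf_dvd_iff_pow_eq_one.1 huo.dvd)
  have hxu : Commute u x := (Commute.refl g).pow_pow _ _
  have hxp : ¬ p ∣ orderOf x := hxo ▸ hm
  -- central element
  have hu1 : u ≠ 1 := by
    intro h; rw [h, orderOf_one] at huo; exact hp.ne_one huo.symm
  haveI : Nontrivial D := ⟨⟨⟨u, huD⟩, 1, fun h => hu1 (congrArg Subtype.val h)⟩⟩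
  haveI := hDpgrp.center_nontrivial
  obtain ⟨⟨⟨z, hzD⟩, hzc⟩, hz1⟩ := exists_ne (1 : Subgroup.center D)
  have hz1' : z ≠ 1 := by
    rintro rfl; exact hz1 rfl
  have hzo : p ∣ orderOf z := by
    by_contra h; exact hz1' (aux_reg_in_D hp D hDpgrp z hzD h)
  have hzcomm : ∀ d ∈ D, d * z = z * d := by
    intro d hd
    have := (Subgroup.mem_center_iff.1 hzc) ⟨d, hd⟩
    simpa using congrArg Subtype.val this
  have hconj := aux_conj D hDn hkl u z g huD hzD hgD (by rw [huo]) hzo hpg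
  have hucomm : ∀ d ∈ D, d * u = u * d := by
    obtain ⟨c, hc⟩ := isConj_iff.1 hconj
    intro d hd
    have h := hzcomm (c⁻¹ * d * c) (by simpa using hDn.conj_mem d hd c⁻¹)
    rw [← hc]
    calc d * (c * z * c⁻¹) = c * ((c⁻¹ * d * c) * z) * c⁻¹ := by group
      _ = c * (z * (c⁻¹ * d * c)) * c⁻¹ := by rw [h]
      _ = c * z * c⁻¹ * d := by group
  -- x centralizes D
  obtain ⟨N, hNn, hNc, n, hNi⟩ := hnilp u huD huo
  have hmemC : ∀ d : G, d * u = u * d → d ∈ Subgroup.centralizer ({u} : Set G) := by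
    intro d hd
    rw [Subgroup.mem_centralizer_singleton_iff]
    first | exact hd | exact hd.symm
  have hxC := hmemC x hxu.eq.symm
  have hxN : (⟨x, hxC⟩ : Subgroup.centralizer ({u} : Set G)) ∈ N := by
    refine aux_mem_of_index hp N hNn n hNi _ ?_
    rwa [Subgroup.orderOf_mk]
  have hxD : ∀ d ∈ D, x * d = d * x := by
    intro d hd
    have hdC := hmemC d (hucomm d hd)
    set X : Subgroup.centralizer ({u} : Set G) := ⟨x, hxC⟩ with hX
    set Y : Subgroup.centralizer ({u} : Set G) := ⟨d, hdC⟩ with hY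
    have hk : X * (Y * X⁻¹ * Y⁻¹) ∈ N := N.mul_mem hxN (hNn.conj_mem _ (N.inv_mem hxN) Y)
    have hk' : x * d * x⁻¹ * d⁻¹ ∈ D := D.mul_mem (hDn.conj_mem d hd x) (D.inv_mem hd)
    have hval : ((X * (Y * X⁻¹ * Y⁻¹) : Subgroup.centralizer ({u} : Set G)) : G)
        = x * d * x⁻¹ * d⁻¹ := by
      simp [hX, hY, mul_assoc]
    have ho : ¬ p ∣ orderOf (x * d * x⁻¹ * d⁻¹) := by
      rw [← hval, Subgroup.orderOf_coe]
      intro h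
      have h5 := h.trans (Subgroup.orderOf_dvd_natCard N hk)
      exact (Nat.Prime.coprime_iff_not_dvd hp).1 hNc.symm h5
    have h6 := aux_reg_in_D hp D hDpgrp _ hk' ho
    rw [mul_inv_eq_one, mul_inv_eq_iff_eq_mul] at h6
    exact h6
  -- contradiction with faithfulness
  obtain ⟨w, hw, e, he, hxe⟩ := hprod x
  obtain ⟨k, hk⟩ := hDpgrp ⟨w, hw⟩
  have hk' : w ^ (p ^ k) = 1 := by simpa using congrArg Subtype.val hk
  have hwx : Commute w⁻¹ x := by
    have h : Commute x w := hxD w hw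
    exact h.symm.inv_left
  have hee : e = w⁻¹ * x := by rw [hxe]; group
  have hepow : e ^ (p ^ k) = x ^ (p ^ k) := by
    rw [hee, hwx.mul_pow, inv_pow, hk', inv_one, one_mul]
  have hxpow : ∀ d ∈ D, Commute (x ^ (p ^ k)) d := fun d hd =>
    Commute.pow_left (hxD d hd) _
  have he1 : e ^ (p ^ k) = 1 := by
    refine hfaith _ (E.pow_mem he _) (fun d hd => ?_)
    rw [hepow]; exact hxpow d hd
  have hxk : x ^ (p ^ k) = 1 := hepow ▸ he1
  have hxDm := aux_mem_of_pow hp D hDn hDsyl x k hxk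
  exact hx1 (aux_reg_in_D hp D hDpgrp x hxDm hxp)
end

section
/- Under these hypotheses, the normal Sylow p-subgroup D is abelian. -/
theorem aux_orbit {G : Type*} [Group G] [Fintype G] (g : G) :
    (ConjClasses.mk g).carrier.ncard * Nat.card (Subgroup.centralizer ({g} : Set G))
      = Nat.card G := by
  classical
  rw [Subgroup.nat_card_centralizer_nat_card_stabilizer, ← ConjAct.orbit_eq_carrier_conjClasses]
  rw [← Nat.card_coe_set_eq, ← Nat.card_prod,
    Nat.card_congr (MulAction.orbitProdStabilizerEquivGroup (ConjAct G) g)]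
  exact Nat.card_congr ConjAct.ofConjAct.toEquiv

theorem aux_lt {G : Type*} [Group G] [Finite G] {H K : Subgroup G} (h : H < K) :
    2 * Nat.card H ≤ Nat.card K := by
  obtain ⟨k, hk⟩ := Subgroup.card_dvd_of_le h.le
  have h1 : 0 < Nat.card K := Nat.card_pos
  have h2 : k ≠ 1 := by
    rintro rfl
    exact h.ne (Subgroup.eq_of_le_of_card_ge h.le (by omega))
  have h3 : k ≠ 0 := by
    rintro rfl
    omega
  have : 2 ≤ k := by omega
  rw [hk, mul_comm]
  exact Nat.mul_le_mul_left _ this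

theorem aux_three {α : Type*} [Finite α] (P : α → Prop)
    (h : Nat.card α = Nat.card {c // P c} + 2) (x y w : α) (hx : ¬ P x) (hy : ¬ P y)
    (hw : ¬ P w) (hxy : x ≠ y) : w = x ∨ w = y := by
  classical
  by_contra! hc
  have := Fintype.ofFinite α
  have h1 : Nat.card {c // ¬ P c} = 2 := by
    have := Nat.card_congr (Equiv.sumCompl P)
    rw [Nat.card_sum] at this
    omega
  have h2 : ({x, y, w} : Finset α) ⊆ Finset.univ.filter (fun c => ¬ P c) := by
    intro c hc
    simp only [Finset.mem_insert, Finset.mem_singleton] at hc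
    rcases hc with rfl | rfl | rfl <;> simpa
  have h3 := Finset.card_le_card h2
  rw [Finset.card_eq_three.mpr ⟨x, y, w, hxy, hc.1.symm, hc.2.symm, rfl⟩] at h3
  rw [Nat.card_eq_fintype_card, Fintype.card_subtype] at h1
  omega

/-- Hypotheses: `G` is a finite group with normal Sylow `p`-subgroup `D`, `E` is a
`p'`-complement acting faithfully on `D`, `k(G) - ℓ_p(G) = 2`, and the centralizer of
every element of `D` of order `p` is `p`-nilpotent. -/
theorem stmt_3 {p : ℕ} (hp : p.Prime) {G : Type*} [Group G] [Fintype G]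
    (D E : Subgroup G)
    (hDn : D.Normal)
    (hDpgrp : IsPGroup p D)
    (hDsyl : ¬ p ∣ D.index)
    (hEp' : Nat.Coprime (Nat.card E) p)
    (hDEinf : D ⊓ E = ⊥)
    (hDEsup : D ⊔ E = ⊤)
    (hfaith : ∀ y ∈ E, (∀ d ∈ D, y * d = d * y) → y = 1)
    (hkl : Nat.card (ConjClasses G) =
      Nat.card {c : ConjClasses G // ∀ g ∈ c.carrier, ¬ p ∣ orderOf g} + 2)
    (hnilp : ∀ u : G, u ∈ D → orderOf u = p →
      ∃ N : Subgroup (Subgroup.centralizer ({u} : Set G)), N.Normal ∧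
        Nat.Coprime (Nat.card N) p ∧ ∃ n : ℕ, N.index = p ^ n) :
    ∀ a ∈ D, ∀ b ∈ D, a * b = b * a := by
  by_contra! hcon
  obtain ⟨a, ha, b, hb, hab⟩ := hcon
  have := hDn
  have := Fact.mk hp
  set Z : Subgroup G := D ⊓ Subgroup.centralizer (D : Set G) with hZ
  have hZn : Z.Normal := inferInstance
  have haZ : a ∉ Z := fun h => hab ((Subgroup.mem_centralizer_iff.mp h.2 b hb).symm)
  have hord : ∀ u ∈ D, u ≠ 1 → ∃ k, orderOf u = p ^ k ∧ k ≠ 0 := by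
    intro u hu hu1
    obtain ⟨k, hk⟩ := IsPGroup.iff_orderOf.mp hDpgrp ⟨u, hu⟩
    rw [Subgroup.orderOf_mk] at hk
    refine ⟨k, hk, ?_⟩
    rintro rfl
    rw [pow_zero, orderOf_eq_one_iff] at hk
    exact hu1 hk
  have hsing : ∀ u ∈ D, u ≠ 1 → p ∣ orderOf u := by
    intro u hu hu1
    obtain ⟨k, hk, hk0⟩ := hord u hu hu1
    rw [hk]
    exact dvd_pow_self p hk0
  have ha1 : a ≠ 1 := fun h => haZ (h ▸ Z.one_mem)
  obtain ⟨z, hzZ, hz1⟩ : ∃ z ∈ Z, z ≠ 1 := by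
    have : Nontrivial D := ⟨⟨a, ha⟩, 1, fun h => ha1 (congrArg Subtype.val h)⟩
    have := hDpgrp.center_nontrivial
    obtain ⟨⟨⟨z, hzD⟩, hzc⟩, hne⟩ := exists_ne (1 : Subgroup.center D)
    refine ⟨z, ⟨hzD, ?_⟩, fun h => hne (by subst h; rfl)⟩
    refine Subgroup.mem_centralizer_iff.mpr ?_
    intro d hd
    exact congrArg Subtype.val (Subgroup.mem_center_iff.mp hzc ⟨d, hd⟩)
  have hconjmem : ∀ (N : Subgroup G), N.Normal → ∀ x y : G, IsConj x y → x ∈ N → y ∈ N := by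
    intro N hN x y hxy hx
    obtain ⟨c, rfl⟩ := isConj_iff.mp hxy
    exact hN.conj_mem x hx c
  have hPm : ∀ g : G, p ∣ orderOf g →
      ¬ (∀ h ∈ (ConjClasses.mk g).carrier, ¬ p ∣ orderOf h) :=
    fun g hg h => h g ConjClasses.mem_carrier_mk hg
  have hza : ConjClasses.mk z ≠ ConjClasses.mk a := fun h =>
    haZ (hconjmem Z hZn z a (ConjClasses.mk_eq_mk_iff_isConj.mp h) hzZ)
  have hcls : ∀ g : G, p ∣ orderOf g → IsConj z g ∨ IsConj a g := by
    intro g hg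
    rcases aux_three _ hkl (ConjClasses.mk z) (ConjClasses.mk a) (ConjClasses.mk g)
      (hPm z (hsing z hzZ.1 hz1)) (hPm a (hsing a ha ha1)) (hPm g hg) hza with h | h
    · exact Or.inl (ConjClasses.mk_eq_mk_iff_isConj.mp h).symm
    · exact Or.inr (ConjClasses.mk_eq_mk_iff_isConj.mp h).symm
  have hsD : ∀ g : G, p ∣ orderOf g → g ∈ D := by
    intro g hg
    rcases hcls g hg with h | h
    · exact hconjmem D hDn _ _ h hzZ.1
    · exact hconjmem D hDn _ _ h ha
  obtain ⟨n, hn⟩ := IsPGroup.iff_card.mp hDpgrp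
  have hcop : Nat.Coprime D.index (Nat.card D) := by
    rw [hn]
    exact (Nat.Coprime.symm ((Nat.Prime.coprime_iff_not_dvd hp).mpr hDsyl)).pow_right n
  have hCz : Subgroup.centralizer ({z} : Set G) ≤ D := by
    intro g hg
    have hgz : Commute z g := Subgroup.mem_centralizer_singleton_iff.mp hg |>.symm
    have hm : g ^ D.index ∈ D := Subgroup.pow_index_mem D g
    have hq : g ^ Nat.card D ∈ D := by
      have hy : orderOf (g ^ Nat.card D) ∣ D.index := by
        apply orderOf_dvd_of_pow_eq_one
        rw [← pow_mul, Subgroup.card_mul_index, pow_card_eq_one']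
      obtain ⟨k, hk, hk0⟩ := hord z hzZ.1 hz1
      have hco : (orderOf z).Coprime (orderOf (g ^ Nat.card D)) := by
        rw [hk]
        exact (((Nat.Prime.coprime_iff_not_dvd hp).mpr hDsyl).pow_left k).coprime_dvd_right hy
      have h1 := (hgz.pow_right (Nat.card D)).orderOf_mul_eq_mul_orderOf_of_coprime hco
      have h2 : z * g ^ Nat.card D ∈ D := by
        apply hsD
        rw [h1]
        exact (hsing z hzZ.1 hz1).mul_right _
      exact (Subgroup.mul_mem_cancel_left D hzZ.1).mp h2
    rw [← QuotientGroup.eq_one_iff] at hm hq ⊢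
    rw [QuotientGroup.mk_pow] at hm hq
    have h1 := Nat.dvd_gcd (orderOf_dvd_of_pow_eq_one hm) (orderOf_dvd_of_pow_eq_one hq)
    rw [Nat.Coprime.gcd_eq_one hcop, Nat.dvd_one, orderOf_eq_one_iff] at h1
    exact h1
  have hZD : Z < D := lt_of_le_of_ne inf_le_left fun h => haZ (h ▸ ha)
  have hZC : Z < Subgroup.centralizer ({a} : Set G) := by
    refine lt_of_le_of_ne ?_ fun h => haZ (h ▸ Subgroup.mem_centralizer_singleton_iff.mpr rfl)
    intro x hx
    exact Subgroup.mem_centralizer_singleton_iff.mpr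
      (Subgroup.mem_centralizer_iff.mp hx.2 a ha).symm
  have e1 := aux_lt hZD
  have e2 := aux_lt hZC
  have e3 := aux_orbit z
  have e4 := aux_orbit a
  have e5 : Nat.card (Subgroup.centralizer ({z} : Set G)) ≤ Nat.card D :=
    Nat.card_le_card_of_injective _ (Subgroup.inclusion_injective hCz)
  have e6 : (ConjClasses.mk z).carrier.ncard + 1 ≤ Nat.card Z := by
    have h1 : insert 1 (ConjClasses.mk z).carrier ⊆ (Z : Set G) := by
      rintro x (rfl | hx)
      · exact Z.one_mem
      · exact hconjmem Z hZn z x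
          (ConjClasses.mk_eq_mk_iff_isConj.mp (ConjClasses.mem_carrier_iff_mk_eq.mp hx)).symm hzZ
    have h2 : (1 : G) ∉ (ConjClasses.mk z).carrier := by
      intro hx
      have := ConjClasses.mk_eq_mk_iff_isConj.mp (ConjClasses.mem_carrier_iff_mk_eq.mp hx)
      exact hz1 (isConj_one_right.mp this)
    have h3 := Set.ncard_le_ncard h1 (Set.toFinite _)
    rw [Set.ncard_insert_of_notMem h2 (Set.toFinite _)] at h3
    rwa [← Nat.card_coe_set_eq] at h3
  have e7 : Nat.card D ≤ (ConjClasses.mk a).carrier.ncard + Nat.card Z := by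
    have h1 : (D : Set G) ⊆ (ConjClasses.mk a).carrier ∪ (Z : Set G) := by
      intro x hx
      by_cases hx1 : x = 1
      · exact Or.inr (hx1 ▸ Z.one_mem)
      rcases hcls x (hsing x hx hx1) with h | h
      · exact Or.inr (hconjmem Z hZn z x h hzZ)
      · exact Or.inl (ConjClasses.mem_carrier_iff_mk_eq.mpr
          (ConjClasses.mk_eq_mk_iff_isConj.mpr h.symm))
    have h3 := (Set.ncard_le_ncard h1 (Set.toFinite _)).trans (Set.ncard_union_le _ _)
    rwa [← Nat.card_coe_set_eq, ← Nat.card_coe_set_eq (Z : Set G)] at h3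
  have e8 : 0 < Nat.card D := Nat.card_pos
  generalize Nat.card D = d at *
  generalize Nat.card Z = q at *
  generalize (ConjClasses.mk a).carrier.ncard = s at *
  generalize (ConjClasses.mk z).carrier.ncard = t at *
  have f1 : s * (2 * q) ≤ t * d := by
    calc s * (2 * q) ≤ _ := Nat.mul_le_mul_left _ e2
      _ = _ := e4.trans e3.symm
      _ ≤ _ := Nat.mul_le_mul_left _ e5
  have f2 : d ≤ 2 * s := by omega
  have f3 : d * q ≤ 2 * s * q := Nat.mul_le_mul_right _ f2
  have f4 : (t + 1) * d ≤ q * d := Nat.mul_le_mul_right _ e6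
  nlinarith
end

section
/- Under these hypotheses, there exist elements u and v of D ∖ {1} that are not conjugate in G, such that D ∖ {1} is the disjoint union of the G-conjugacy class of u and the G-conjugacy class of v, and each of these two conjugacy classes has cardinality equal to the order of E. -/
theorem aux_one {p : ℕ} {G : Type*} [Group G] {g : G} {k : ℕ}
    (h : g ^ p ^ k = 1) (hc : Nat.Coprime (orderOf g) p) : g = 1 := by
  have h1 : orderOf g ∣ p ^ k := orderOf_dvd_of_pow_eq_one h
  exact orderOf_eq_one_iff.1 (Nat.Coprime.eq_one_of_dvd (hc.pow_right k) h1)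

theorem aux_class {G : Type*} [Group G] [Fintype G] (u : G) :
    Nat.card {g : G // IsConj u g} = (Subgroup.centralizer ({u} : Set G)).index := by
  have h := Subgroup.nat_card_centralizer_nat_card_stabilizer u
  have h1 := (MulAction.stabilizer (ConjAct G) u).card_mul_index
  have h2 := (Subgroup.centralizer ({u} : Set G)).card_mul_index
  have h3 : Nat.card (ConjAct G) = Nat.card G := rfl
  rw [← h, h3, ← h2] at h1
  have h4 := Nat.eq_of_mul_eq_mul_left Nat.card_pos h1
  rw [← h4, MulAction.index_stabilizer, ← Nat.card_coe_set_eq]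
  refine Nat.card_congr (Equiv.subtypeEquivRight fun g => ?_)
  rw [ConjAct.mem_orbit_conjAct, isConj_comm]

theorem aux_mem_s4 {p : ℕ} (hp : p.Prime) {G : Type*} [Group G] [Fintype G]
    (D : Subgroup G) (hDn : D.Normal) (hDsyl : ¬ p ∣ D.index) {g : G} {k : ℕ}
    (h : g ^ p ^ k = 1) : g ∈ D := by
  have h1 : g ^ D.index ∈ D := D.pow_index_mem g
  have hc : Nat.Coprime (p ^ k) D.index := ((Nat.Prime.coprime_iff_not_dvd hp).2 hDsyl).pow_left k
  have hc2 : Nat.Coprime (orderOf g) D.index := hc.coprime_dvd_left (orderOf_dvd_of_pow_eq_one h)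
  obtain ⟨m, hm⟩ := exists_pow_eq_self_of_coprime hc2.symm
  rw [← hm]
  exact D.pow_mem h1 m

theorem aux_pow {p : ℕ} {G : Type*} [Group G] (D : Subgroup G)
    (hDpgrp : IsPGroup p D) {d : G} (hd : d ∈ D) : ∃ k : ℕ, d ^ p ^ k = 1 := by
  obtain ⟨k, hk⟩ := isPGroup_iff_pow_pow_eq_one.1 hDpgrp ⟨d, hd⟩
  exact ⟨k, by simpa [Subtype.ext_iff] using hk⟩

theorem aux_dvd {p : ℕ} (hp : p.Prime) {G : Type*} [Group G] (D : Subgroup G)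
    (hDpgrp : IsPGroup p D) {d : G} (hd : d ∈ D) (h1 : d ≠ 1) : p ∣ orderOf d := by
  obtain ⟨k, hk⟩ := aux_pow D hDpgrp hd
  by_contra h
  exact h1 (aux_one hk ((Nat.Prime.coprime_iff_not_dvd hp).2 h).symm)

theorem aux_cent {p : ℕ} {G : Type*} [Group G] [Fintype G]
    (D E : Subgroup G) (hDn : D.Normal) (hDpgrp : IsPGroup p D)
    (hEp' : Nat.Coprime (Nat.card E) p)
    (hDEsup : D ⊔ E = ⊤)
    (hfaith : ∀ y ∈ E, (∀ d ∈ D, y * d = d * y) → y = 1)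
    {s : G} (hs : Nat.Coprime (orderOf s) p) (hsD : ∀ d ∈ D, s * d = d * s) : s = 1 := by
  obtain ⟨d, hd, e, he, rfl⟩ := Subgroup.mem_sup_of_normal_left.1
    (show s ∈ D ⊔ E by rw [hDEsup]; trivial)
  obtain ⟨k, hk⟩ := aux_pow D hDpgrp hd
  have hcomm : Commute d⁻¹ (d * e) := (Commute.inv_right (hsD d hd)).symm
  have hem : e ^ p ^ k = (d * e) ^ p ^ k := by
    have := hcomm.mul_pow (p ^ k)
    rw [inv_mul_cancel_left, inv_pow, hk] at this
    simpa using this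
  have he1 : e ^ p ^ k = 1 := by
    refine hfaith _ (E.pow_mem he _) fun x hx => ?_
    rw [hem]
    exact (Commute.pow_left (hsD x hx) _)
  exact aux_one (hem ▸ he1) hs

theorem aux_CD {p : ℕ} (hp : p.Prime) {G : Type*} [Group G] [Fintype G]
    (D E : Subgroup G)
    (hDn : D.Normal)
    (hDpgrp : IsPGroup p D)
    (hDsyl : ¬ p ∣ D.index)
    (hEp' : Nat.Coprime (Nat.card E) p)
    (hDEsup : D ⊔ E = ⊤)
    (hfaith : ∀ y ∈ E, (∀ d ∈ D, y * d = d * y) → y = 1)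
    (hnilp : ∀ u : G, u ∈ D → orderOf u = p →
      ∃ N : Subgroup (Subgroup.centralizer ({u} : Set G)), N.Normal ∧
        Nat.Coprime (Nat.card N) p ∧ ∃ n : ℕ, N.index = p ^ n)
    {u : G} (hu : u ∈ D) (hu1 : u ≠ 1) (huD : ∀ d ∈ D, u * d = d * u)
    {g : G} (hg : u * g = g * u) : g ∈ D := by
  have hpu := aux_dvd hp D hDpgrp hu hu1
  set z := u ^ (orderOf u / p) with hz
  have hzp : orderOf z = p := orderOf_pow_orderOf_div (orderOf_pos u).ne' hpu
  have hzD : z ∈ D := D.pow_mem hu _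
  have hzc : ∀ d ∈ D, z * d = d * z := fun d hd => Commute.pow_left (huD d hd) _
  have hzg : z * g = g * z := Commute.pow_left hg _
  clear_value z
  obtain ⟨N, hN, hNp, n, hn⟩ := hnilp z hzD hzp
  have hcop : ∀ x : Subgroup.centralizer ({z} : Set G), x ∈ N → Nat.Coprime (orderOf (x : G)) p := by
    intro x hx
    rw [Subgroup.orderOf_coe]
    exact hNp.coprime_dvd_left (Subgroup.orderOf_dvd_natCard N hx)
  have hbot : N = ⊥ := by
    rw [Subgroup.eq_bot_iff_forall]
    intro x hx
    apply Subtype.ext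
    refine aux_cent D E hDn hDpgrp hEp' hDEsup hfaith (hcop x hx) fun d hd => ?_
    let d' : Subgroup.centralizer ({z} : Set G) :=
      ⟨d, Subgroup.mem_centralizer_singleton_iff.2 (hzc d hd).symm⟩
    have h1 : x * d' * x⁻¹ * d'⁻¹ ∈ N := by
      have := N.mul_mem hx (hN.conj_mem _ (N.inv_mem hx) d')
      simpa [mul_assoc] using this
    have h2 : (x : G) * d * (x : G)⁻¹ * d⁻¹ ∈ D :=
      D.mul_mem (hDn.conj_mem _ hd _) (D.inv_mem hd)
    obtain ⟨k, hk⟩ := aux_pow D hDpgrp h2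
    have h3 := aux_one hk (hcop _ h1)
    rw [mul_inv_eq_one, mul_inv_eq_iff_eq_mul] at h3
    exact h3
  rw [hbot, Subgroup.index_bot] at hn
  let g' : Subgroup.centralizer ({z} : Set G) :=
      ⟨g, Subgroup.mem_centralizer_singleton_iff.2 hzg.symm⟩
  have h4 : g' ^ p ^ n = 1 := by rw [← hn]; exact pow_card_eq_one'
  have h5 : g ^ p ^ n = 1 := by simpa [g', Subtype.ext_iff] using h4
  exact aux_mem_s4 hp D hDn hDsyl h5

theorem aux_two {p : ℕ} {G : Type*} [Group G] [Fintype G]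
    (hkl : Nat.card (ConjClasses G) =
      Nat.card {c : ConjClasses G // ∀ g ∈ c.carrier, ¬ p ∣ orderOf g} + 2) :
    ∃ a b : G, ¬ IsConj a b ∧ p ∣ orderOf a ∧ p ∣ orderOf b ∧
      ∀ g, p ∣ orderOf g → IsConj a g ∨ IsConj b g := by
  classical
  have h := Nat.card_congr (Equiv.sumCompl
    (fun c : ConjClasses G => ∀ g ∈ c.carrier, ¬ p ∣ orderOf g))
  rw [Nat.card_sum, hkl] at h
  have h2 := Nat.add_left_cancel h
  obtain ⟨⟨c1, h1⟩, ⟨c2, h2⟩, hne, hall⟩ := Nat.card_eq_two_iff.1 h2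
  push Not at h1 h2
  obtain ⟨a, ha, hpa⟩ := h1
  obtain ⟨b, hb, hpb⟩ := h2
  rw [ConjClasses.mem_carrier_iff_mk_eq] at ha hb
  subst ha hb
  refine ⟨a, b, fun hab => hne (Subtype.ext (ConjClasses.mk_eq_mk_iff_isConj.2 hab)), hpa, hpb, ?_⟩
  intro g hg
  have hm : (⟨ConjClasses.mk g, fun hc => hc g ConjClasses.mem_carrier_mk hg⟩ :
    {c : ConjClasses G // ¬ ∀ g ∈ c.carrier, ¬ p ∣ orderOf g}) ∈ Set.univ := trivial
  rw [← hall] at hm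
  rcases hm with hm | hm
  · exact Or.inl (ConjClasses.mk_eq_mk_iff_isConj.1 (congrArg Subtype.val hm)).symm
  · exact Or.inr (ConjClasses.mk_eq_mk_iff_isConj.1 (congrArg Subtype.val hm)).symm


/-- Hypotheses: `G` is a finite group with normal Sylow `p`-subgroup `D`, `E` is a
`p'`-complement acting faithfully on `D`, `k(G) - ℓ_p(G) = 2`, and the centralizer of
every element of `D` of order `p` is `p`-nilpotent. -/
theorem stmt_4 {p : ℕ} (hp : p.Prime) {G : Type*} [Group G] [Fintype G]
    (D E : Subgroup G)
    (hDn : D.Normal)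
    (hDpgrp : IsPGroup p D)
    (hDsyl : ¬ p ∣ D.index)
    (hEp' : Nat.Coprime (Nat.card E) p)
    (hDEinf : D ⊓ E = ⊥)
    (hDEsup : D ⊔ E = ⊤)
    (hfaith : ∀ y ∈ E, (∀ d ∈ D, y * d = d * y) → y = 1)
    (hkl : Nat.card (ConjClasses G) =
      Nat.card {c : ConjClasses G // ∀ g ∈ c.carrier, ¬ p ∣ orderOf g} + 2)
    (hnilp : ∀ u : G, u ∈ D → orderOf u = p →
      ∃ N : Subgroup (Subgroup.centralizer ({u} : Set G)), N.Normal ∧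
        Nat.Coprime (Nat.card N) p ∧ ∃ n : ℕ, N.index = p ^ n) :
    ∃ u v : G, u ∈ D ∧ u ≠ 1 ∧ v ∈ D ∧ v ≠ 1 ∧ ¬ IsConj u v ∧
      {g : G | g ∈ D ∧ g ≠ 1} = {g : G | IsConj u g} ∪ {g : G | IsConj v g} ∧
      Nat.card {g : G // IsConj u g} = Nat.card E ∧
      Nat.card {g : G // IsConj v g} = Nat.card E := by
  haveI := Fact.mk hp
  have hCD : ∀ {u : G}, u ∈ D → u ≠ 1 → (∀ d ∈ D, u * d = d * u) → ∀ {g : G}, u * g = g * u →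
      g ∈ D := fun {u} hu hu1 huD {g} hg =>
    aux_CD hp D E hDn hDpgrp hDsyl hEp' hDEsup hfaith hnilp hu hu1 huD hg
  have hDE : D.index = Nat.card E := by
    refine (Subgroup.isComplement'_of_disjoint_and_mul_eq_univ
      (disjoint_iff.2 (by rw [inf_comm]; exact hDEinf)) ?_ : Subgroup.IsComplement' E D).index_eq_card
    rw [← Subgroup.mul_normal, sup_comm, hDEsup]; rfl
  obtain ⟨a, b, hab, hpa, hpb, hall⟩ := aux_two hkl
  have hne : ∀ x : G, p ∣ orderOf x → x ≠ 1 := by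
    rintro x hx rfl
    rw [orderOf_one] at hx
    exact hp.one_lt.ne' (Nat.dvd_one.1 hx)
  have hconjD : ∀ {x y : G}, IsConj x y → x ∈ D → y ∈ D := by
    intro x y hxy hx
    obtain ⟨c, rfl⟩ := isConj_iff.1 hxy
    exact hDn.conj_mem _ hx c
  have hcentcard : ∀ u : G, u ∈ D → u ≠ 1 → (∀ d ∈ D, u * d = d * u) →
      Nat.card {g : G // IsConj u g} = Nat.card E := by
    intro u hu hu1 huD
    rw [aux_class, ← hDE]
    congr 1
    ext g
    rw [Subgroup.mem_centralizer_singleton_iff]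
    exact ⟨fun h => hCD hu hu1 huD h.symm, fun h => (huD g h).symm⟩
  -- the p-part of a p-singular element
  have hpart : ∀ g : G, p ∣ orderOf g → ∃ u : G, u ∈ D ∧ u ≠ 1 ∧ u * g = g * u := by
    intro g hg
    have hz : orderOf (g ^ (orderOf g / p)) = p := orderOf_pow_orderOf_div (orderOf_pos g).ne' hg
    refine ⟨g ^ (orderOf g / p), ?_, hne _ (by rw [hz]), Commute.pow_left (Commute.refl g) _⟩
    refine aux_mem_s4 hp D hDn hDsyl (k := 1) ?_
    rw [pow_one]
    exact orderOf_dvd_iff_pow_eq_one.1 hz.dvd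
  by_cases hcomm : ∀ u ∈ D, ∀ d ∈ D, u * d = d * u
  · have hsing : ∀ g : G, p ∣ orderOf g → g ∈ D := by
      intro g hg
      obtain ⟨u, hu, hu1, hug⟩ := hpart g hg
      exact hCD hu hu1 (hcomm u hu) hug
    have haD := hsing a hpa
    have hbD := hsing b hpb
    refine ⟨a, b, haD, hne a hpa, hbD, hne b hpb, hab, ?_, hcentcard a haD (hne a hpa) (hcomm a haD),
      hcentcard b hbD (hne b hpb) (hcomm b hbD)⟩
    ext g
    constructor
    · rintro ⟨hg, hg1⟩
      exact hall g (aux_dvd hp D hDpgrp hg hg1)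
    · rintro (hg | hg)
      · refine ⟨hconjD hg haD, ?_⟩
        rintro rfl
        exact hne a hpa (isConj_one_left.1 hg)
      · refine ⟨hconjD hg hbD, ?_⟩
        rintro rfl
        exact hne b hpb (isConj_one_left.1 hg)
  · exfalso
    push Not at hcomm
    obtain ⟨x, hx, y, hy, hxy⟩ := hcomm
    have hx1 : x ≠ 1 := by rintro rfl; simp at hxy
    -- center element
    obtain ⟨z, hz, hz1, hzD⟩ : ∃ z ∈ D, z ≠ 1 ∧ ∀ d ∈ D, z * d = d * z := by
      haveI : Nontrivial D := ⟨⟨⟨x, hx⟩, 1, fun h => hx1 (congrArg Subtype.val h)⟩⟩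
      haveI := hDpgrp.center_nontrivial
      obtain ⟨z, hz⟩ := exists_ne (1 : Subgroup.center D)
      refine ⟨((z : D) : G), (z : D).2, fun h => hz (Subtype.ext (Subtype.ext h)), fun d hd => ?_⟩
      exact (congrArg Subtype.val (Subgroup.mem_center_iff.1 z.2 ⟨d, hd⟩)).symm
    have hcz : ∀ {z g : G}, IsConj z g → (∀ d ∈ D, z * d = d * z) → ∀ d ∈ D, g * d = d * g := by
      intro z g hzg hz d hd
      obtain ⟨c, rfl⟩ := isConj_iff.1 hzg
      have := hz (c⁻¹ * d * c) (by simpa using hDn.conj_mem _ hd c⁻¹)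
      calc c * z * c⁻¹ * d = c * (z * (c⁻¹ * d * c)) * c⁻¹ := by group
        _ = _ := by rw [this]; group
    have hnzx : ¬ IsConj z x := fun h => hxy (hcz h hzD y hy)
    have hall' : ∀ g, p ∣ orderOf g → IsConj z g ∨ IsConj x g := by
      intro g hg
      have h1 := hall z (aux_dvd hp D hDpgrp hz hz1)
      have h2 := hall x (aux_dvd hp D hDpgrp hx hx1)
      rcases hall g hg with h | h <;> rcases h1 with h1 | h1 <;> rcases h2 with h2 | h2
      · exact Or.inl (h1.symm.trans h)
      · exact Or.inl (h1.symm.trans h)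
      · exact Or.inr (h2.symm.trans h)
      · exact absurd (h1.symm.trans h2) hnzx
      · exact absurd (h1.symm.trans h2) hnzx
      · exact Or.inr (h2.symm.trans h)
      · exact Or.inl (h1.symm.trans h)
      · exact Or.inl (h1.symm.trans h)
    have hsing : ∀ g : G, p ∣ orderOf g → g ∈ D := fun g hg =>
      (hall' g hg).elim (fun h => hconjD h hz) (fun h => hconjD h hx)
    set C := Subgroup.centralizer ({x} : Set G) with hC
    set Z := D ⊓ Subgroup.centralizer (D : Set G) with hZ
    have hmZ : ∀ g, g ∈ Z ↔ g ∈ D ∧ ∀ d ∈ D, g * d = d * g := by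
      intro g
      rw [hZ, Subgroup.mem_inf, Subgroup.mem_centralizer_iff]
      exact and_congr_right fun _ => forall₂_congr fun d _ => eq_comm
    have hCleD : C ≤ D := by
      intro g hg
      have hg' : g * x = x * g := Subgroup.mem_centralizer_singleton_iff.1 hg
      by_cases hpg : p ∣ orderOf g
      · exact hsing g hpg
      · obtain ⟨k, hk⟩ := aux_pow D hDpgrp hx
        have hc : Nat.Coprime (orderOf x) (orderOf g) :=
          (((Nat.Prime.coprime_iff_not_dvd hp).2 hpg).pow_left k).coprime_dvd_left
            (orderOf_dvd_of_pow_eq_one hk)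
        have ho := (Commute.orderOf_mul_eq_mul_orderOf_of_coprime hg'.symm hc)
        have : x * g ∈ D := hsing _ (ho ▸ (aux_dvd hp D hDpgrp hx hx1).mul_right _)
        exact (Subgroup.mul_mem_cancel_left D hx).1 this
    have hZC : Z ≤ C := fun g hg =>
      Subgroup.mem_centralizer_singleton_iff.2 (((hmZ g).1 hg).2 x hx)
    have hxC : x ∈ C := Subgroup.mem_centralizer_singleton_iff.2 rfl
    have hxZ : x ∉ Z := fun h => hxy (((hmZ x).1 h).2 y hy)
    have hcz' := hcentcard z hz hz1 hzD
    have hcx := aux_class x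
    have hZset : {g : G | IsConj z g} = (Z : Set G) \ {1} := by
      ext g
      constructor
      · intro h
        refine ⟨(hmZ g).2 ⟨hconjD h hz, hcz h hzD⟩, ?_⟩
        rintro rfl
        exact hz1 (isConj_one_left.1 h)
      · rintro ⟨h, h1⟩
        have h' := (hmZ g).1 h
        refine (hall' g (aux_dvd hp D hDpgrp h'.1 h1)).resolve_right fun hxg => ?_
        exact hxy (hcz hxg.symm h'.2 y hy)
    have hXset : {g : G | IsConj x g} = (D : Set G) \ (Z : Set G) := by
      ext g
      constructor
      · intro h
        refine ⟨hconjD h hx, fun hg => ?_⟩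
        exact hxy (hcz h.symm ((hmZ g).1 hg).2 y hy)
      · rintro ⟨h, h1⟩
        have hg1 : g ≠ 1 := by rintro rfl; exact h1 Z.one_mem
        refine (hall' g (aux_dvd hp D hDpgrp h hg1)).resolve_left fun hzg => ?_
        exact h1 ((hmZ g).2 ⟨h, hcz hzg hzD⟩)
    have e1 : Nat.card E + 1 = Nat.card Z := by
      have h1 : Set.ncard {g : G | IsConj z g} = Nat.card E := hcz'
      rw [hZset] at h1
      rw [← h1, Set.ncard_diff_singleton_add_one Z.one_mem]; rfl
    have e2 : C.index + Nat.card Z = Nat.card D := by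
      have h1 : Set.ncard {g : G | IsConj x g} = C.index := hcx
      rw [hXset] at h1
      rw [← h1]
      exact Set.ncard_diff_add_ncard_of_subset (s := (Z : Set G)) (t := (D : Set G))
        (inf_le_left : Z ≤ D)
    have e3 : Nat.card C * C.index = Nat.card D * Nat.card E := by
      rw [C.card_mul_index, ← hDE, D.card_mul_index]
    have e4 : 2 * Nat.card Z ≤ Nat.card C := by
      obtain ⟨r, hr⟩ := Subgroup.card_dvd_of_le hZC
      rw [hr, mul_comm]
      refine Nat.mul_le_mul_left _ ?_
      have hpos : 0 < Nat.card C := Nat.card_pos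
      rcases r with _ | _ | r
      · rw [Nat.mul_zero] at hr; omega
      · exfalso
        rw [zero_add, mul_one] at hr
        exact hxZ ((Subgroup.eq_of_le_of_card_ge hZC hr.le) ▸ hxC)
      · omega
    have e5 : Nat.card C ≤ Nat.card D := Subgroup.card_le_of_le hCleD
    have hEpos : 0 < Nat.card E := Nat.card_pos
    generalize Nat.card C = c at *
    generalize Nat.card D = n at *
    generalize Nat.card Z = q at *
    generalize Nat.card E = e at *
    generalize C.index = i at *
    subst e1 e2
    nlinarith [Nat.mul_le_mul_right i e4]
end

section
/- Let F be a finite field, let n ≥ 2, let ℓ be a prime with ℓ ≥ 5, let G = SL_n(F) be the special linear group of degree n over F, and let Z be a subgroup of the center of G (hence Z is normal in G). If the quotient group G/Z has an abelian Sylow ℓ-subgroup, then ℓ does not divide the order of Z, and moreover every Sylow ℓ-subgroup of G itself is abelian. -/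
open Matrix in
theorem aux_pgroup {G : Type*} [Group G] [Finite G] {ℓ : ℕ} [Fact ℓ.Prime] (Z : Subgroup G) [Z.Normal]
    (hab : ∃ P : Sylow ℓ (G ⧸ Z), ∀ a ∈ P, ∀ b ∈ P, a * b = b * a)
    (Q : Subgroup G) (hQ : IsPGroup ℓ Q) (a b : G) (ha : a ∈ Q) (hb : b ∈ Q) :
    (b * a)⁻¹ * (a * b) ∈ Z := by
  obtain ⟨P, hP⟩ := hab
  obtain ⟨R, hR⟩ := (hQ.map (QuotientGroup.mk' Z)).exists_le_sylow
  obtain ⟨g, hg⟩ := MulAction.exists_smul_eq (G ⧸ Z) P R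
  have key : ∀ x ∈ Q, g⁻¹ * (x : G ⧸ Z) * g ∈ P := by
    intro x hx
    have h1 : (x : G ⧸ Z) ∈ R := hR ⟨x, hx, rfl⟩
    rw [← hg] at h1
    have h1 : (x : G ⧸ Z) ∈ (g • P : Sylow ℓ (G ⧸ Z)).toSubgroup := h1
    rw [Sylow.coe_subgroup_smul, Subgroup.mem_pointwise_smul_iff_inv_smul_mem] at h1
    have h2 : g⁻¹ * (x : G ⧸ Z) * g ∈ P.toSubgroup := by
      simpa [MulAut.smul_def, ← map_inv, MulAut.conj_apply] using h1
    exact h2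
  have h := hP _ (key a ha) _ (key b hb)
  have h2 : (a : G ⧸ Z) * b = b * a := by
    have h3 : g⁻¹ * ((a : G ⧸ Z) * b) * g = g⁻¹ * ((b : G ⧸ Z) * a) * g := by
      simpa [mul_assoc] using h
    simpa using h3
  exact QuotientGroup.eq.1 (by simpa using h2.symm)

def aux_K {F : Type*} [Field F] (n ℓ : ℕ) :
    Subgroup (Matrix.SpecialLinearGroup (Fin n) F) where
  carrier := {g | ∃ v : Fin n → F, (∀ i, v i ^ ℓ = 1) ∧ (g : Matrix (Fin n) (Fin n) F) = Matrix.diagonal v}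
  one_mem' := ⟨1, by simp, by simp⟩
  mul_mem' := by
    rintro a b ⟨v, hv, ha⟩ ⟨w, hw, hb⟩
    exact ⟨fun i => v i * w i, fun i => by simp [mul_pow, hv, hw], by simp [ha, hb]⟩
  inv_mem' := by
    rintro a ⟨v, hv, ha⟩
    rcases Nat.eq_zero_or_pos ℓ with rfl | hl
    · refine ⟨fun i => (a⁻¹ : Matrix.SpecialLinearGroup (Fin n) F) i i, by simp, ?_⟩
      rw [Matrix.SpecialLinearGroup.coe_inv, ha, Matrix.adjugate_diagonal]
      ext i j
      by_cases h : i = j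
      · subst h; simp
      · simp [h]
    · have h0 : ∀ i, v i ≠ 0 := fun i h => by
        have := hv i
        rw [h, zero_pow hl.ne'] at this
        exact zero_ne_one this
      have h1 : Matrix.diagonal v * Matrix.diagonal (fun i => (v i)⁻¹) = 1 := by
        simp [Matrix.diagonal_mul_diagonal, h0]
      have h2 : (a : Matrix (Fin n) (Fin n) F) * (a⁻¹ : Matrix.SpecialLinearGroup (Fin n) F) = 1 := by
        rw [← Matrix.SpecialLinearGroup.coe_mul]; simp
      refine ⟨fun i => (v i)⁻¹, fun i => by simp [hv], ?_⟩
      rw [ha] at h2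
      have h3 := mul_eq_one_comm.1 h1
      exact (left_inv_eq_right_inv h3 h2).symm

theorem aux_K_pgroup {F : Type*} [Field F] (n ℓ : ℕ) : IsPGroup ℓ (aux_K (F := F) n ℓ) := by
  rintro ⟨g, v, hv, hg⟩
  refine ⟨1, ?_⟩
  apply Subtype.ext
  apply Subtype.ext
  simp only [pow_one, Subgroup.coe_pow, Matrix.SpecialLinearGroup.coe_pow, hg, Matrix.diagonal_pow]
  have : v ^ ℓ = 1 := funext hv
  simp [this]

theorem aux_main {F : Type*} [Field F] [Fintype F] {ℓ m : ℕ} (hℓ : ℓ.Prime) (hℓ5 : 5 ≤ ℓ)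
    (hm : 0 < m) (ζ : F) (hζ : orderOf ζ = ℓ) :
    ∃ Q : Subgroup (Matrix.SpecialLinearGroup (Fin (ℓ * m)) F), IsPGroup ℓ Q ∧
      ∃ a ∈ Q, ∃ b ∈ Q, ¬ (b * a)⁻¹ * (a * b) ∈
        Subgroup.center (Matrix.SpecialLinearGroup (Fin (ℓ * m)) F) := by
  have hn : 5 * m ≤ ℓ * m := Nat.mul_le_mul_right _ hℓ5
  generalize hN : ℓ * m = n at *
  haveI : NeZero n := ⟨by omega⟩
  haveI := Fact.mk hℓ
  let s : Equiv.Perm (Fin n) := Equiv.addRight (Fin.ofNat n m)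
  have hs : s ^ ℓ = 1 := by
    have hpow : ∀ (k : ℕ) (i : Fin n), (s ^ k) i = i + k • Fin.ofNat n m := by
      intro k
      induction k with
      | zero => intro i; rw [pow_zero, zero_nsmul, add_zero]; rfl
      | succ k ih =>
        intro i
        rw [pow_succ', Equiv.Perm.mul_apply, ih, succ_nsmul, ← add_assoc]; rfl
    apply Equiv.ext
    intro i
    have : ℓ • Fin.ofNat n m = 0 := by
      have h : ∀ k : ℕ, k • Fin.ofNat n m = Fin.ofNat n (k * m) := by
        intro k
        induction k with
        | zero => simp
        | succ k ih => rw [succ_nsmul, ih]; ext; simp [Fin.val_add, add_mul]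
      rw [h, hN]; ext; simp
    rw [hpow, this, add_zero]; rfl
  have hodd : Odd ℓ := hℓ.odd_of_ne_two (by omega)
  have hsign : Equiv.Perm.sign s = 1 := by
    have h : (Equiv.Perm.sign s) ^ ℓ = 1 := by rw [← map_pow, hs, map_one]
    rcases Int.units_eq_one_or (Equiv.Perm.sign s) with h1 | h1
    · exact h1
    · rw [h1, hodd.neg_one_pow] at h; exact absurd h (by decide)
  have hζl : ζ ^ ℓ = 1 := hζ ▸ pow_orderOf_eq_one ζ
  have hζ0 : ζ ≠ 0 := by rintro rfl; rw [zero_pow hℓ.ne_zero] at hζl; exact zero_ne_one hζl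
  have hζ2 : ζ ^ 2 ≠ 1 := fun h => by
    have := Nat.le_of_dvd (by norm_num) (hζ ▸ orderOf_dvd_of_pow_eq_one h)
    omega
  let S : Matrix.SpecialLinearGroup (Fin n) F :=
    ⟨s.permMatrix F, by rw [Matrix.det_permutation, hsign]; simp⟩
  have hSp : ∀ k : ℕ, ((S ^ k : Matrix.SpecialLinearGroup (Fin n) F) : Matrix (Fin n) (Fin n) F) = (s ^ k).permMatrix F := by
    intro k
    induction k with
    | zero => simp
    | succ k ih =>
      rw [pow_succ, Matrix.SpecialLinearGroup.coe_mul, ih, pow_succ' s, Matrix.permMatrix_mul]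
  have hSl : S ^ ℓ = 1 := by
    apply Subtype.ext
    rw [hSp, hs]; simp
  have hSD : ∀ v : Fin n → F, s.permMatrix F * Matrix.diagonal v = Matrix.diagonal (v ∘ s) * s.permMatrix F := by
    intro v
    ext i j
    rw [Matrix.mul_diagonal, Matrix.diagonal_mul]
    by_cases h : s i = j
    · subst h; simp [mul_comm]
    · simp [Equiv.Perm.permMatrix, PEquiv.toMatrix_apply, h]
  let p0 : Fin n := ⟨0, by omega⟩
  let p1 : Fin n := ⟨m, by omega⟩
  let p2 : Fin n := ⟨2 * m, by omega⟩
  let p3 : Fin n := ⟨3 * m, by omega⟩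
  have hs0 : s p0 = p1 := by
    ext; simp [s, p0, p1, Fin.val_add]; exact Nat.mod_eq_of_lt (by omega)
  have hs2 : s p2 = p3 := by
    ext; simp [s, p2, p3, Fin.val_add]; rw [Nat.mod_eq_of_lt (by omega)]; omega
  have h01 : p1 ≠ p0 := by simp [p0, p1, Fin.ext_iff]; omega
  have h20 : p2 ≠ p0 := by simp [p0, p2, Fin.ext_iff]; omega
  have h21 : p2 ≠ p1 := by simp [p1, p2, Fin.ext_iff]; omega
  have h30 : p3 ≠ p0 := by simp [p0, p3, Fin.ext_iff]; omega
  have h31 : p3 ≠ p1 := by simp [p1, p3, Fin.ext_iff]; omega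
  let v : Fin n → F := fun i => (if i = p0 then ζ else 1) * (if i = p1 then ζ⁻¹ else 1)
  have hv0 : v p0 = ζ := by simp [v, h01.symm]
  have hv1 : v p1 = ζ⁻¹ := by simp [v, h01]
  have hv2 : v p2 = 1 := by simp [v, h20, h21]
  have hv3 : v p3 = 1 := by simp [v, h30, h31]
  have hvl : ∀ i, v i ^ ℓ = 1 := by
    intro i
    simp only [v, mul_pow, ite_pow, inv_pow, hζl, one_pow, inv_one, ite_self, mul_one]
  let D : Matrix.SpecialLinearGroup (Fin n) F :=
    ⟨Matrix.diagonal v, by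
      rw [Matrix.det_diagonal, Finset.prod_mul_distrib]
      simp [hζ0]⟩
  have hDK : D ∈ aux_K (F := F) n ℓ := ⟨v, hvl, rfl⟩
  have hHp : IsPGroup ℓ (Subgroup.zpowers S) := by
    rintro ⟨g, k, rfl⟩
    refine ⟨1, Subtype.ext ?_⟩
    simp only [pow_one, Subgroup.coe_pow, Subgroup.coe_one]
    change (S ^ k) ^ ℓ = 1
    rw [← zpow_natCast, ← zpow_mul, mul_comm, zpow_mul, zpow_natCast, hSl, one_zpow]
  have hnorm : Subgroup.zpowers S ≤ Subgroup.normalizer (aux_K (F := F) n ℓ) := by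
    rw [Subgroup.zpowers_le]
    apply Subgroup.mem_normalizer_fintype
    rintro x ⟨w, hw, hx⟩
    refine ⟨w ∘ s, fun i => hw _, ?_⟩
    have h1 : (S : Matrix (Fin n) (Fin n) F) * x = Matrix.diagonal (w ∘ s) * S := by
      rw [hx]; exact hSD w
    rw [Matrix.SpecialLinearGroup.coe_mul, Matrix.SpecialLinearGroup.coe_mul, h1, mul_assoc,
      ← Matrix.SpecialLinearGroup.coe_mul]
    simp
  refine ⟨Subgroup.zpowers S ⊔ aux_K n ℓ, hHp.to_sup_of_normal_right' (aux_K_pgroup n ℓ) hnorm,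
    S, Subgroup.mem_sup_left (Subgroup.mem_zpowers S), D, Subgroup.mem_sup_right hDK, ?_⟩
  intro hc
  obtain ⟨r, -, hr⟩ := Matrix.SpecialLinearGroup.mem_center_iff.1 hc
  have h1 : (S * D : Matrix.SpecialLinearGroup (Fin n) F) = (D * S) * ((D * S)⁻¹ * (S * D)) := by group
  have h2 := congrArg (fun g : Matrix.SpecialLinearGroup (Fin n) F => (g : Matrix (Fin n) (Fin n) F)) h1
  simp only [Matrix.SpecialLinearGroup.coe_mul _ ((D * S)⁻¹ * (S * D)), ← hr] at h2
  have h3 : s.permMatrix F * Matrix.diagonal v = Matrix.diagonal v * s.permMatrix F * Matrix.scalar (Fin n) r := h2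
  have h4 : ∀ i, v (s i) = v i * r := by
    intro i
    have := congrFun (congrFun h3 i) (s i)
    rw [Matrix.scalar_apply, Matrix.mul_diagonal, Matrix.mul_diagonal, Matrix.diagonal_mul] at this
    simpa [Equiv.Perm.permMatrix, PEquiv.toMatrix_apply] using this
  have h5 := h4 p2
  rw [hs2, hv2, hv3, one_mul] at h5
  have h6 := h4 p0
  rw [hs0, hv0, hv1, ← h5, mul_one] at h6
  apply hζ2
  rw [pow_two]
  nth_rewrite 1 [← h6]
  exact inv_mul_cancel₀ hζ0


/-- Kessar's lemma for the special linear case: if `ℓ ≥ 5` is a prime, `Z` is a central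
subgroup of `G = SLₙ(F)` (`n ≥ 2`, `F` a finite field) and `G/Z` has an abelian Sylow
`ℓ`-subgroup, then `ℓ` does not divide `|Z|` and every Sylow `ℓ`-subgroup of `G` is
abelian. -/
theorem stmt_7 {F : Type*} [Field F] [Fintype F] {n : ℕ} (hn : 2 ≤ n)
    {ℓ : ℕ} (hℓ : ℓ.Prime) (hℓ5 : 5 ≤ ℓ)
    (Z : Subgroup (Matrix.SpecialLinearGroup (Fin n) F))
    (hZ : Z ≤ Subgroup.center (Matrix.SpecialLinearGroup (Fin n) F)) [Z.Normal]
    (hab : ∃ P : Sylow ℓ (Matrix.SpecialLinearGroup (Fin n) F ⧸ Z),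
      ∀ a ∈ P, ∀ b ∈ P, a * b = b * a) :
    ¬ ℓ ∣ Nat.card Z ∧
      ∀ P : Sylow ℓ (Matrix.SpecialLinearGroup (Fin n) F),
        ∀ a ∈ P, ∀ b ∈ P, a * b = b * a := by
  haveI := Fact.mk hℓ
  have hnd : ¬ ℓ ∣ Nat.card Z := by
    intro hd
    obtain ⟨⟨z, hz⟩, hzo⟩ := exists_prime_orderOf_dvd_card' ℓ hd
    rw [Subgroup.orderOf_mk] at hzo
    obtain ⟨ζ, hζn, hζ⟩ := Matrix.SpecialLinearGroup.mem_center_iff.1 (hZ hz)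
    have hz1 : z ≠ 1 := by
      rintro rfl
      rw [orderOf_one] at hzo
      exact hℓ.one_lt.ne hzo
    have hζ1 : ζ ≠ 1 := by
      rintro rfl
      apply hz1
      apply Subtype.ext
      rw [← hζ]; simp
    have hζl : ζ ^ ℓ = 1 := by
      have h := congrArg (fun g : Matrix.SpecialLinearGroup (Fin n) F =>
        (g : Matrix (Fin n) (Fin n) F)) (hzo ▸ pow_orderOf_eq_one z)
      simp only [Matrix.SpecialLinearGroup.coe_pow, ← hζ, ← map_pow,
        Matrix.SpecialLinearGroup.coe_one] at h
      have := congrFun (congrFun h ⟨0, by omega⟩) ⟨0, by omega⟩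
      simpa using this
    have ho : orderOf ζ = ℓ := orderOf_eq_prime hζl hζ1
    obtain ⟨m, rfl⟩ : ℓ ∣ n := by
      rw [← ho]; exact orderOf_dvd_of_pow_eq_one (by simpa using hζn)
    have hm : 0 < m := Nat.pos_of_ne_zero (by rintro rfl; omega)
    obtain ⟨Q, hQ, a, ha, b, hb, hc⟩ := aux_main hℓ hℓ5 hm ζ ho
    exact hc (hZ (aux_pgroup Z hab Q hQ a b ha hb))
  refine ⟨hnd, fun P a ha b hb => ?_⟩
  have h1 := aux_pgroup Z hab P P.isPGroup' a b ha hb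
  have h2 : (b * a)⁻¹ * (a * b) ∈ (P : Subgroup _) :=
    mul_mem (inv_mem (mul_mem hb ha)) (mul_mem ha hb)
  have h3 : (b * a)⁻¹ * (a * b) = 1 := by
    obtain ⟨k, hk⟩ := P.isPGroup' ⟨_, h2⟩
    have hk' : ((b * a)⁻¹ * (a * b)) ^ ℓ ^ k = 1 := congrArg Subtype.val hk
    have hcz : ((b * a)⁻¹ * (a * b)) ^ Nat.card Z = 1 :=
      congrArg Subtype.val (pow_card_eq_one' (x := (⟨_, h1⟩ : Z)))
    have hcop : Nat.Coprime (ℓ ^ k) (Nat.card Z) :=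
      Nat.Coprime.pow_left k ((Nat.Prime.coprime_iff_not_dvd hℓ).2 hnd)
    rw [← orderOf_eq_one_iff]
    exact Nat.eq_one_of_dvd_coprimes hcop (orderOf_dvd_of_pow_eq_one hk')
      (orderOf_dvd_of_pow_eq_one hcz)
  exact (inv_mul_eq_one.1 h3).symm
end

section
/- Let F be a finite field with q elements, let n be a natural number, and let ℓ be a prime with ℓ ≥ 5, ℓ dividing q − 1, and ℓ ≤ n. Then for every subgroup Z of the center of SL_n(F), every Sylow ℓ-subgroup of the quotient group SL_n(F)/Z is nonabelian. -/
open Matrix in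
theorem aux_perm (n ℓ : ℕ) (hℓ5 : 5 ≤ ℓ) (hℓn : ℓ ≤ n) :
    ∃ c : Equiv.Perm (Fin n), c ^ ℓ = 1 ∧ c ⟨0, by omega⟩ = ⟨1, by omega⟩ ∧
      c ⟨2, by omega⟩ = ⟨3, by omega⟩ := by
  obtain ⟨m, rfl⟩ : ∃ m, ℓ = m + 2 := ⟨ℓ - 2, by omega⟩
  refine ⟨Equiv.Perm.viaEmbeddingHom (Fin.castLEEmb hℓn) (finRotate (m+2)), ?_, ?_, ?_⟩
  · rw [← map_pow]
    have h : orderOf (finRotate (m+2)) = m + 2 := by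
      rw [isCycle_finRotate.orderOf, support_finRotate, Finset.card_univ, Fintype.card_fin]
    have := pow_orderOf_eq_one (finRotate (m+2))
    rw [h] at this
    rw [this, map_one]
  · have := Equiv.Perm.viaEmbedding_apply (finRotate (m+2)) (Fin.castLEEmb hℓn) ⟨0, by omega⟩
    rw [finRotate_of_lt (by omega)] at this
    exact this
  · have := Equiv.Perm.viaEmbedding_apply (finRotate (m+2)) (Fin.castLEEmb hℓn) ⟨2, by omega⟩
    rw [finRotate_of_lt (by omega)] at this
    exact this

theorem aux_root {F : Type*} [Field F] [Fintype F] {ℓ : ℕ}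
    (hℓ : ℓ.Prime) (hdvd : ℓ ∣ Fintype.card F - 1) : ∃ z : F, orderOf z = ℓ := by
  classical
  have := Fact.mk hℓ
  rw [← Fintype.card_units] at hdvd
  obtain ⟨u, hu⟩ := exists_prime_orderOf_dvd_card ℓ hdvd
  exact ⟨u, by rw [orderOf_units, hu]⟩

def auxQ (F : Type*) [Field F] (n ℓ : ℕ) : Subgroup (Matrix.SpecialLinearGroup (Fin n) F) where
  carrier := {M | ∃ d : Fin n → F, d ^ ℓ = 1 ∧ (M : Matrix (Fin n) (Fin n) F) = Matrix.diagonal d}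
  one_mem' := ⟨1, by simp, by simp⟩
  mul_mem' := by
    rintro a b ⟨d, hd, ha⟩ ⟨e, he, hb⟩
    refine ⟨d * e, by rw [mul_pow, hd, he, one_mul], ?_⟩
    rw [Matrix.SpecialLinearGroup.coe_mul, ha, hb, Matrix.diagonal_mul_diagonal]; rfl
  inv_mem' := by
    rintro a ⟨d, hd, ha⟩
    have hdet := a.det_coe
    rw [ha, Matrix.det_diagonal] at hdet
    have hne : ∀ i, d i ≠ 0 := fun i h => by
      rw [Finset.prod_eq_zero (Finset.mem_univ i) h] at hdet
      exact zero_ne_one hdet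
    let y : Matrix.SpecialLinearGroup (Fin n) F := ⟨Matrix.diagonal d⁻¹, by
      rw [Matrix.det_diagonal]; simp [hdet]⟩
    have : a⁻¹ = y := by
      apply inv_eq_of_mul_eq_one_right
      apply Subtype.ext
      rw [Matrix.SpecialLinearGroup.coe_mul, ha]
      simp [y, Matrix.diagonal_mul_diagonal, hne]
    exact ⟨d⁻¹, by rw [inv_pow, hd, inv_one], by rw [this]⟩

theorem aux_group {F : Type*} [Field F] [Fintype F] {n ℓ : ℕ}
    (hℓ : ℓ.Prime) (hℓ5 : 5 ≤ ℓ)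
    (hdvd : ℓ ∣ Fintype.card F - 1) (hℓn : ℓ ≤ n) :
    ∃ H : Subgroup (Matrix.SpecialLinearGroup (Fin n) F), IsPGroup ℓ H ∧
      ∃ a ∈ H, ∃ b ∈ H, (a * b)⁻¹ * (b * a) ∉ 
        Subgroup.center (Matrix.SpecialLinearGroup (Fin n) F) := by
  classical
  obtain ⟨c, hc, hc0, hc2⟩ := aux_perm n ℓ hℓ5 hℓn
  obtain ⟨z, hz⟩ := aux_root (F := F) hℓ hdvd
  have hzl : z ^ ℓ = 1 := hz ▸ pow_orderOf_eq_one z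
  have hz0 : z ≠ 0 := by rintro rfl; simp [hℓ.ne_zero] at hzl
  have hz2 : z * z ≠ 1 := by
    intro h
    have := orderOf_dvd_of_pow_eq_one (x := z) (n := 2) (by rw [pow_two, h])
    have := Nat.le_of_dvd (by norm_num) this
    omega
  have hodd : Odd ℓ := hℓ.odd_of_ne_two (by omega)
  have hsign : Equiv.Perm.sign c = 1 := by
    have h := congrArg Equiv.Perm.sign hc
    rw [map_pow, map_one] at h
    rcases Int.units_eq_one_or (Equiv.Perm.sign c) with h1 | h1
    · exact h1
    · rw [h1, hodd.neg_one_pow] at h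
      exact absurd h (by decide)
  let b : Matrix.SpecialLinearGroup (Fin n) F := ⟨c.permMatrix F, by
    rw [Matrix.det_permutation, hsign]; simp⟩
  have hbapp : ∀ i j, (b : Matrix (Fin n) (Fin n) F) i j = if c i = j then 1 else 0 := by
    intro i j
    simp [b, Equiv.Perm.permMatrix, PEquiv.toMatrix_apply, eq_comm]
  have hbpow : b ^ ℓ = 1 := by
    have key : ∀ k : ℕ, ((b ^ k : Matrix.SpecialLinearGroup (Fin n) F) :
        Matrix (Fin n) (Fin n) F) = (c ^ k).permMatrix F := by
      intro k
      induction k with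
      | zero => simp
      | succ k ih => 
        rw [pow_succ, Matrix.SpecialLinearGroup.coe_mul, ih, pow_succ', Matrix.permMatrix_mul]
    apply Subtype.ext
    rw [key, hc]; simp
  let i0 : Fin n := ⟨0, by omega⟩
  let i1 : Fin n := ⟨1, by omega⟩
  let i2 : Fin n := ⟨2, by omega⟩
  let i3 : Fin n := ⟨3, by omega⟩
  have h01 : i0 ≠ i1 := by simp [i0, i1]
  let d : Fin n → F := Pi.mulSingle i0 z * Pi.mulSingle i1 z⁻¹
  have hd0 : d i0 = z := by simp [d, i0, i1, Pi.mulSingle_apply]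
  have hd1 : d i1 = z⁻¹ := by simp [d, i0, i1, Pi.mulSingle_apply]
  have hd2 : d i2 = 1 := by simp [d, i0, i1, i2, Pi.mulSingle_apply]
  have hd3 : d i3 = 1 := by simp [d, i0, i1, i3, Pi.mulSingle_apply]
  let a : Matrix.SpecialLinearGroup (Fin n) F := ⟨Matrix.diagonal d, by
    rw [Matrix.det_diagonal]
    simp only [d, Pi.mul_apply, Finset.prod_mul_distrib]
    rw [Finset.prod_pi_mulSingle' , Finset.prod_pi_mulSingle']
    simp [hz0]⟩
  have hdl : d ^ ℓ = 1 := by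
    simp only [d]
    rw [mul_pow, ← Pi.mulSingle_pow, ← Pi.mulSingle_pow, inv_pow, hzl]
    simp
  refine ⟨Subgroup.zpowers b ⊔ auxQ F n ℓ, ?_, a, ?_, b, ?_, ?_⟩
  · apply IsPGroup.to_sup_of_normal_right'
    · rintro ⟨x, k, rfl⟩
      refine ⟨1, Subtype.ext ?_⟩
      simp only [pow_one, Subgroup.coe_pow, Subgroup.coe_one]
      rw [← zpow_natCast, ← zpow_mul, mul_comm, zpow_mul, zpow_natCast, hbpow, one_zpow]
    · rintro ⟨x, e, he, hx⟩
      refine ⟨1, Subtype.ext (Subtype.ext ?_)⟩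
      simp only [pow_one, Subgroup.coe_pow, Subgroup.coe_one]
      rw [Matrix.SpecialLinearGroup.coe_pow, hx, Matrix.diagonal_pow, he]
      simp
    · rw [Subgroup.zpowers_le]
      apply Subgroup.mem_normalizer_fintype
      rintro x ⟨e, he, hx⟩
      have hdet := x.det_coe
      rw [hx, Matrix.det_diagonal] at hdet
      let y : Matrix.SpecialLinearGroup (Fin n) F := ⟨Matrix.diagonal (e ∘ c), by
        rw [Matrix.det_diagonal, ← hdet]; exact Equiv.prod_comp c e⟩
      have : b * x * b⁻¹ = y := by
        rw [mul_inv_eq_iff_eq_mul]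
        apply Subtype.ext
        rw [Matrix.SpecialLinearGroup.coe_mul, Matrix.SpecialLinearGroup.coe_mul, hx]
        ext i j
        rw [Matrix.mul_diagonal, Matrix.diagonal_mul, hbapp]
        by_cases h : c i = j <;> simp [h]
      rw [this]
      refine ⟨e ∘ c, ?_, rfl⟩
      funext i
      exact congrFun he (c i)
  · exact (le_sup_right : auxQ F n ℓ ≤ _) ⟨d, hdl, rfl⟩
  · exact (le_sup_left : Subgroup.zpowers b ≤ _) (Subgroup.mem_zpowers b)
  · intro h
    rw [Matrix.SpecialLinearGroup.mem_center_iff] at h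
    obtain ⟨r, -, hr⟩ := h
    have h2 : ((b * a : Matrix.SpecialLinearGroup (Fin n) F) : Matrix (Fin n) (Fin n) F)
        = (a * b : Matrix.SpecialLinearGroup (Fin n) F) * Matrix.scalar (Fin n) r := by
      rw [hr, ← Matrix.SpecialLinearGroup.coe_mul, mul_inv_cancel_left]
    rw [Matrix.SpecialLinearGroup.coe_mul, Matrix.SpecialLinearGroup.coe_mul] at h2
    have h3 : ∀ i, d (c i) = d i * r := by
      intro i
      have := congrFun (congrFun h2 i) (c i)
      simp only [Matrix.scalar_apply] at this
      rw [Matrix.mul_diagonal] at this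
      have ha : (a : Matrix (Fin n) (Fin n) F) = Matrix.diagonal d := rfl
      rw [ha, Matrix.mul_diagonal, Matrix.diagonal_mul, hbapp] at this
      simpa using this
    have e0 := h3 i0
    have e2 := h3 i2
    rw [show c i0 = i1 from hc0, hd0, hd1] at e0
    rw [show c i2 = i3 from hc2, hd2, hd3, one_mul] at e2
    rw [← e2, mul_one] at e0
    apply hz2
    nth_rewrite 1 [← e0]
    exact inv_mul_cancel₀ hz0

/-- If `F` is a finite field with `q` elements, `ℓ ≥ 5` is a prime with `ℓ ∣ q - 1` and
`ℓ ≤ n`, then for every central subgroup `Z` of `SLₙ(F)`, every Sylow `ℓ`-subgroup of the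
quotient `SLₙ(F)/Z` is nonabelian. -/
theorem stmt_8 {F : Type*} [Field F] [Fintype F] {q n ℓ : ℕ}
    (hq : Fintype.card F = q) (hℓ : ℓ.Prime) (hℓ5 : 5 ≤ ℓ)
    (hdvd : ℓ ∣ q - 1) (hℓn : ℓ ≤ n)
    (Z : Subgroup (Matrix.SpecialLinearGroup (Fin n) F))
    (hZ : Z ≤ Subgroup.center (Matrix.SpecialLinearGroup (Fin n) F)) [Z.Normal] :
    ∀ P : Sylow ℓ (Matrix.SpecialLinearGroup (Fin n) F ⧸ Z),
      ¬ ∀ a ∈ P, ∀ b ∈ P, a * b = b * a := by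
  intro P hP
  subst hq
  have := Fact.mk hℓ
  obtain ⟨H, hH, a, ha, b, hb, hab⟩ := aux_group (F := F) (n := n) hℓ hℓ5 hdvd hℓn
  obtain ⟨R, hR⟩ := (hH.map (QuotientGroup.mk' Z)).exists_le_sylow
  obtain ⟨g, rfl⟩ := MulAction.exists_smul_eq (Matrix.SpecialLinearGroup (Fin n) F ⧸ Z) P R
  have key : ∀ x ∈ H, g⁻¹ * (QuotientGroup.mk' Z x) * g ∈ P := by
    intro x hx
    have h1 := hR (Subgroup.mem_map_of_mem (QuotientGroup.mk' Z) hx)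
    rw [Sylow.coe_subgroup_smul, Subgroup.mem_pointwise_smul_iff_inv_smul_mem] at h1
    change _ ∈ P.toSubgroup
    simpa [MulAut.smul_def, ← map_inv, MulAut.conj_apply] using h1
  have h := hP _ (key a ha) _ (key b hb)
  have h' : QuotientGroup.mk' Z (a * b) = QuotientGroup.mk' Z (b * a) := by
    rw [map_mul, map_mul]
    apply mul_right_cancel (b := g)
    simpa [mul_assoc] using h
  exact hab (hZ (QuotientGroup.eq.1 h'))
end

section
/- Let p be a prime and G a finite group with a normal Sylow p-subgroup D such that every nontrivial normal subgroup of G has order divisible by p (i.e. O_{p'}(G) = 1). If G has exactly 4 conjugacy classes and exactly 3 conjugacy classes consisting of p-regular elements, then G is isomorphic to the alternating group A_4 (in particular p = 2 and D is a Klein four group C_2 × C_2). -/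
theorem aux_class_card {G : Type*} [Group G] [Finite G] (g : G) :
    Nat.card (ConjClasses.mk g).carrier * Nat.card (Subgroup.centralizer {g}) = Nat.card G := by
  classical
  have := Fintype.ofFinite G
  rw [Subgroup.nat_card_centralizer_nat_card_stabilizer, ← ConjAct.orbit_eq_carrier_conjClasses]
  have h := MulAction.card_orbit_mul_card_stabilizer_eq_card_group (ConjAct G) g
  rw [← Nat.card_eq_fintype_card, ← Nat.card_eq_fintype_card, ← Nat.card_eq_fintype_card] at h
  exact h

theorem aux_arith (a b : ℕ) (ha : 0 < a) (hb : 0 < b) (hab : a ≤ b) (h1 : a ∣ 1 + a + b)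
    (h2 : b ∣ 1 + a + b) :
    1 + a + b = 3 ∨ 1 + a + b = 4 ∨ 1 + a + b = 6 := by
  have h3 : b ∣ 1 + a := (Nat.dvd_add_left (dvd_refl b)).1 h2
  obtain ⟨k, hk⟩ := h3
  have hk0 : k ≠ 0 := by rintro rfl; omega
  by_cases hk1 : k = 1
  · subst hk1
    have h4 : b = 1 + a := by omega
    subst h4
    have h5 : a ∣ 2 := by
      have : 1 + a + (1 + a) = 2 + a * 2 := by ring
      rw [this] at h1
      exact (Nat.dvd_add_left (Dvd.intro _ rfl)).1 h1
    have := Nat.le_of_dvd (by norm_num) h5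
    omega
  · have : b * 2 ≤ b * k := Nat.mul_le_mul_left _ (by omega)
    omega

theorem aux_three_s10 {Q : Type*} [Group Q] [Finite Q] (h : Nat.card (ConjClasses Q) = 3) :
    Nat.card Q = 3 ∨ Nat.card Q = 4 ∨ Nat.card Q = 6 := by
  classical
  have := Fintype.ofFinite Q
  have hs := sum_conjClasses_card_eq_card (G := Q)
  rw [Nat.card_eq_fintype_card] at h
  have h2 : (Finset.univ.erase (1 : ConjClasses Q)).card = 2 := by
    rw [Finset.card_erase_of_mem (Finset.mem_univ _), Finset.card_univ, h]
  obtain ⟨A, B, hAB, he⟩ := Finset.card_eq_two.1 h2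
  rw [← Finset.add_sum_erase _ _ (Finset.mem_univ (1 : ConjClasses Q)), he,
    Finset.sum_pair hAB] at hs
  have hd : ∀ c : ConjClasses Q, c.carrier.toFinset.card ∣ Nat.card Q ∧
      0 < c.carrier.toFinset.card := by
    intro c
    obtain ⟨g, rfl⟩ := ConjClasses.exists_rep c
    constructor
    · rw [Set.toFinset_card, ← Nat.card_eq_fintype_card]
      exact Dvd.intro _ (aux_class_card g)
    · rw [Finset.card_pos]
      exact ⟨g, by simp [ConjClasses.mem_carrier_mk]⟩
  have h1 : (1 : ConjClasses Q).carrier.toFinset.card = 1 := by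
    rw [Finset.card_eq_one]
    refine ⟨1, ?_⟩
    ext x
    rw [Set.mem_toFinset, ConjClasses.mem_carrier_iff_mk_eq, ConjClasses.one_eq_mk_one,
      ConjClasses.mk_eq_mk_iff_isConj, isConj_one_left, Finset.mem_singleton]
  rw [h1, ← Nat.card_eq_fintype_card] at hs
  obtain ⟨a1, a2⟩ := hd A
  obtain ⟨b1, b2⟩ := hd B
  generalize A.carrier.toFinset.card = a at *
  generalize B.carrier.toFinset.card = b at *
  rw [← hs] at a1 b1 ⊢
  rcases le_total a b with hab | hab
  · have := aux_arith a b a2 b2 hab (by rwa [add_assoc]) (by rwa [add_assoc])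
    omega
  · have := aux_arith b a b2 a2 hab (by convert b1 using 1; ring) (by convert a1 using 1; ring)
    omega

theorem aux_A4 {G : Type*} [Group G] [Finite G] (h12 : Nat.card G = 12)
    (hO : ∀ N : Subgroup G, N.Normal → N ≠ ⊥ → 2 ∣ Nat.card N) :
    Nonempty (G ≃* alternatingGroup (Fin 4)) := by
  classical
  have := Fintype.ofFinite G
  have : Fact (Nat.Prime 3) := ⟨by norm_num⟩
  obtain ⟨g, hg⟩ := exists_prime_orderOf_dvd_card' (G := G) 3 (by rw [h12]; norm_num)
  let H := Subgroup.zpowers g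
  have hH : Nat.card H = 3 := by rw [Nat.card_zpowers, hg]
  have hi : Nat.card (G ⧸ H) = 4 := by
    have := Subgroup.card_eq_card_quotient_mul_card_subgroup H
    rw [h12, hH] at this
    omega
  have hc : H.normalCore = ⊥ := by
    by_contra hne
    have h2 := hO _ (Subgroup.normalCore_normal H) hne
    have h3 := h2.trans (Subgroup.card_dvd_of_le (Subgroup.normalCore_le H))
    rw [hH] at h3
    norm_num at h3
  let e : (G ⧸ H) ≃ Fin 4 := Finite.equivFinOfCardEq hi
  let f : G →* Equiv.Perm (Fin 4) :=
    (e.permCongrHom : _ →* _).comp (MulAction.toPermHom G (G ⧸ H))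
  have hf : Function.Injective f := by
    have h0 : Function.Injective (MulAction.toPermHom G (G ⧸ H)) := by
      rw [← MonoidHom.ker_eq_bot_iff, ← Subgroup.normalCore_eq_ker, hc]
    exact e.permCongrHom.injective.comp h0
  have hr : f.range.index = 2 := by
    have h1 := Subgroup.card_mul_index f.range
    rw [← Nat.card_congr (MonoidHom.ofInjective hf).toEquiv, h12, Nat.card_perm,
      Nat.card_fin] at h1
    have : Nat.factorial 4 = 24 := rfl
    omega
  have ha := Equiv.Perm.eq_alternatingGroup_of_index_eq_two hr
  exact ⟨(MonoidHom.ofInjective hf).trans (MulEquiv.subgroupCongr ha)⟩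

theorem aux_comm {G : Type*} [Group G] (D : Subgroup G) [D.Normal] [IsCyclic D]
    (hC : ∀ d ∈ D, d ≠ 1 → ∀ g, Commute g d → g ∈ D) (hD : D ≠ ⊥) (a b : G ⧸ D) :
    a * b = b * a := by
  induction a using QuotientGroup.induction_on with | _ a =>
  induction b using QuotientGroup.induction_on with | _ b =>
  obtain ⟨d, hd1⟩ := Subgroup.ne_bot_iff_exists_ne_one.1 hD
  have hp : ∀ g : G, ∃ m : ℤ, ∀ x ∈ D, g * x * g⁻¹ = x ^ m := by
    intro g
    obtain ⟨m, hm⟩ := MonoidHom.map_cyclic ((MulAut.conjNormal g : MulAut D) : D →* D)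
    refine ⟨m, fun x hx => ?_⟩
    have := congrArg Subtype.val (hm ⟨x, hx⟩)
    simpa using this
  obtain ⟨m, hm⟩ := hp a
  obtain ⟨n, hn⟩ := hp b
  have h1 : a * b * d * (a * b)⁻¹ = b * a * d * (b * a)⁻¹ := by
    calc a * b * d * (a * b)⁻¹ = a * (b * d * b⁻¹) * a⁻¹ := by group
      _ = (d ^ n : G) ^ m := by rw [hn _ d.2, hm _ (D.zpow_mem d.2 n)]
      _ = (d ^ m : G) ^ n := by rw [← zpow_mul, ← zpow_mul, mul_comm]
      _ = b * (a * d * a⁻¹) * b⁻¹ := by rw [hm _ d.2, hn _ (D.zpow_mem d.2 m)]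
      _ = _ := by group
  rw [← QuotientGroup.mk_mul, ← QuotientGroup.mk_mul, QuotientGroup.eq]
  refine hC d d.2 (by simpa using hd1) _ ?_
  have h2 : a * b * d = b * a * d * (b * a)⁻¹ * (a * b) := by rw [← h1]; group
  show (a * b)⁻¹ * (b * a) * d = d * ((a * b)⁻¹ * (b * a))
  have h3 : (d : G) = (a * b)⁻¹ * (b * a * d * (b * a)⁻¹) * (a * b) := by
    rw [← h1]; group
  conv_rhs => rw [h3]
  group


/-- If a finite group `G` has a normal Sylow `p`-subgroup, `O_{p'}(G) = 1`, exactly `4`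
conjugacy classes and exactly `3` conjugacy classes of `p`-regular elements, then
`p = 2` and `G` is isomorphic to the alternating group `A₄` (so the Sylow `p`-subgroup
is a Klein four group). -/
theorem stmt_10 {p : ℕ} (hp : p.Prime) {G : Type*} [Group G] [Fintype G]
    (D : Subgroup G)
    (hDn : D.Normal)
    (hDpgrp : IsPGroup p D)
    (hDsyl : ¬ p ∣ D.index)
    (hOp' : ∀ N : Subgroup G, N.Normal → N ≠ ⊥ → p ∣ Nat.card N)
    (hk : Nat.card (ConjClasses G) = 4)
    (hl : Nat.card {c : ConjClasses G // ∀ g ∈ c.carrier, ¬ p ∣ orderOf g} = 3) :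
    p = 2 ∧ Nonempty (G ≃* alternatingGroup (Fin 4)) := by
  classical
  have : Fact p.Prime := ⟨hp⟩
  -- p-singular elements
  have hord : ∀ x y : G, IsConj x y → orderOf x = orderOf y := by
    intro x y h
    obtain ⟨c, rfl⟩ := isConj_iff.1 h
    exact (orderOf_injective (MulAut.conj c : G →* G) (MulAut.conj c).injective x).symm
  have hreg : ∀ g : G, (∀ x ∈ (ConjClasses.mk g).carrier, ¬ p ∣ orderOf x) ↔ ¬ p ∣ orderOf g := by
    intro g
    refine ⟨fun h => h g ConjClasses.mem_carrier_mk, fun h x hx => ?_⟩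
    rw [ConjClasses.mem_carrier_iff_mk_eq, ConjClasses.mk_eq_mk_iff_isConj] at hx
    rwa [hord _ _ hx]
  have hs1 : Nat.card {c : ConjClasses G // ¬ ∀ g ∈ c.carrier, ¬ p ∣ orderOf g} = 1 := by
    have := Fintype.card_subtype_compl (fun c : ConjClasses G => ∀ g ∈ c.carrier, ¬ p ∣ orderOf g)
    rw [← Nat.card_eq_fintype_card, ← Nat.card_eq_fintype_card, ← Nat.card_eq_fintype_card,
      hk, hl] at this
    exact this
  obtain ⟨hss, ⟨c0, hc0⟩⟩ := Nat.card_eq_one_iff_unique.1 hs1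
  obtain ⟨s, rfl⟩ := ConjClasses.exists_rep c0
  rw [hreg, not_not] at hc0
  have hsing : ∀ x y : G, p ∣ orderOf x → p ∣ orderOf y → IsConj x y := by
    intro x y hx hy
    have := hss.elim ⟨ConjClasses.mk x, by rw [hreg, not_not]; exact hx⟩
      ⟨ConjClasses.mk y, by rw [hreg, not_not]; exact hy⟩
    exact ConjClasses.mk_eq_mk_iff_isConj.1 (congrArg Subtype.val this)
  have hDbot : D ≠ ⊥ := by
    rintro rfl
    rw [Subgroup.index_bot] at hDsyl
    exact hDsyl (hc0.trans (orderOf_dvd_natCard s))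
  have hDs : ∀ d ∈ D, d ≠ 1 → p ∣ orderOf d := by
    intro d hd h1
    obtain ⟨k, hk⟩ := (IsPGroup.iff_orderOf.1 hDpgrp) ⟨d, hd⟩
    rw [Subgroup.orderOf_mk] at hk
    rw [hk]
    rcases k with _ | k
    · exact absurd (orderOf_eq_one_iff.1 (by simpa using hk)) h1
    · exact dvd_pow_self _ (by simp)
  have hsD : ∀ x, p ∣ orderOf x → x ∈ D := by
    intro x hx
    obtain ⟨d, hd⟩ := Subgroup.ne_bot_iff_exists_ne_one.1 hDbot
    obtain ⟨c, rfl⟩ := isConj_iff.1 (hsing d x (hDs d d.2 (by simpa using hd)) hx)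
    exact hDn.conj_mem _ d.2 _
  have hconj : ∀ x ∈ D, x ≠ 1 → ∀ y ∈ D, y ≠ 1 → ∃ c, c * x * c⁻¹ = y :=
    fun x hx hx1 y hy hy1 => isConj_iff.1 (hsing x y (hDs x hx hx1) (hDs y hy hy1))
  have hDab : ∀ x ∈ D, ∀ y ∈ D, Commute x y := by
    have : Nontrivial D := (Subgroup.nontrivial_iff_ne_bot D).2 hDbot
    have := hDpgrp.center_nontrivial
    obtain ⟨⟨⟨z, hzD⟩, hzc⟩, hz1⟩ := exists_ne (1 : Subgroup.center D)
    have hz1' : z ≠ 1 := by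
      rintro rfl
      exact hz1 rfl
    have hz : ∀ y ∈ D, y * z = z * y := fun y hy =>
      congrArg Subtype.val (Subgroup.mem_center_iff.1 hzc ⟨y, hy⟩)
    intro x hx y hy
    by_cases hx1 : x = 1
    · subst hx1; exact Commute.one_left y
    obtain ⟨c, rfl⟩ := hconj z hzD hz1' x hx hx1
    have h := hz (c⁻¹ * y * c) (by simpa using hDn.conj_mem y hy c⁻¹)
    show c * z * c⁻¹ * y = y * (c * z * c⁻¹)
    calc c * z * c⁻¹ * y = c * (z * (c⁻¹ * y * c)) * c⁻¹ := by group
      _ = _ := by rw [← h]; group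
  have hC : ∀ d ∈ D, d ≠ 1 → ∀ g, Commute g d → g ∈ D := by
    intro d hd hd1 g hg
    by_cases hgp : p ∣ orderOf g
    · exact hsD g hgp
    obtain ⟨k, hk⟩ := (IsPGroup.iff_orderOf.1 hDpgrp) ⟨d, hd⟩
    rw [Subgroup.orderOf_mk] at hk
    have ho := hg.orderOf_mul_eq_mul_orderOf_of_coprime (by
      rw [hk]
      exact Nat.Coprime.pow_right _ ((Nat.Prime.coprime_iff_not_dvd hp).2 hgp).symm)
    have := hsD (g * d) (by rw [ho]; exact (hDs d hd hd1).mul_left _)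
    exact (D.mul_mem_cancel_right hd).1 this
  -- |G/D| + 1 = |D|
  have hcard : Nat.card D = Nat.card (G ⧸ D) + 1 := by
    obtain ⟨⟨d, hdD⟩, hd⟩ := Subgroup.ne_bot_iff_exists_ne_one.1 hDbot
    have hd1 : d ≠ 1 := by simpa using hd
    have h1 := aux_class_card d
    have h2 : Subgroup.centralizer {d} = D := by
      ext x
      rw [Subgroup.mem_centralizer_singleton_iff]
      exact ⟨fun h => hC d hdD hd1 x h, fun h => hDab x h d hdD⟩
    have h3 : (ConjClasses.mk d).carrier = (D : Set G) \ {1} := by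
      ext x
      rw [ConjClasses.mem_carrier_iff_mk_eq, ConjClasses.mk_eq_mk_iff_isConj]
      constructor
      · intro h
        obtain ⟨c, rfl⟩ := isConj_iff.1 h.symm
        exact ⟨hDn.conj_mem _ hdD _, by simpa using hd1⟩
      · rintro ⟨hx, hx1⟩
        exact (hsing d x (hDs d hdD hd1) (hDs x hx hx1)).symm
    rw [h2, h3, Subgroup.card_eq_card_quotient_mul_card_subgroup D] at h1
    have h4 := Nat.eq_of_mul_eq_mul_right Nat.card_pos h1
    rw [← h4]
    exact (Set.ncard_diff_singleton_add_one (s := (D : Set G)) (a := 1) D.one_mem).symm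
  have hq3 : Nat.card (ConjClasses (G ⧸ D)) = 3 := by
    rw [← hl]
    symm
    have hmem : ∀ g, ¬ p ∣ orderOf g → g ∈ D → g = 1 := by
      intro g h hg
      by_contra h1
      exact h (hDs g hg h1)
    refine Nat.card_congr (Equiv.ofBijective
      (fun c => ConjClasses.map (QuotientGroup.mk' D) c.1) ⟨?_, ?_⟩)
    · rintro ⟨c, hc⟩ ⟨c', hc'⟩ h
      obtain ⟨g, rfl⟩ := ConjClasses.exists_rep c
      obtain ⟨g', rfl⟩ := ConjClasses.exists_rep c'
      rw [hreg] at hc hc'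
      apply Subtype.ext
      show ConjClasses.mk g = ConjClasses.mk g'
      have h' : ConjClasses.mk (QuotientGroup.mk' D g) = ConjClasses.mk (QuotientGroup.mk' D g') := h
      rw [ConjClasses.mk_eq_mk_iff_isConj, isConj_iff] at h'
      obtain ⟨x, hx⟩ := h'
      obtain ⟨x, rfl⟩ := QuotientGroup.mk'_surjective D x
      rw [← map_mul, ← map_inv, ← map_mul, QuotientGroup.mk'_apply, QuotientGroup.mk'_apply,
        QuotientGroup.eq] at hx
      rw [ConjClasses.mk_eq_mk_iff_isConj]
      have hcj : IsConj g (x * g * x⁻¹) := isConj_iff.2 ⟨x, rfl⟩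
      rw [hord _ _ hcj] at hc
      refine hcj.trans ?_
      generalize x * g * x⁻¹ = u at *
      by_cases hu : u ∈ D
      · have hg' : g' ∈ D := by
          have := D.mul_mem hu hx
          simpa using this
        rw [hmem _ hc hu, hmem _ hc' hg']
      · let φ : D → D := fun y => ⟨u⁻¹ * y * u * (y : G)⁻¹,
          D.mul_mem (by simpa using hDn.conj_mem y y.2 u⁻¹) (D.inv_mem y.2)⟩
        have hφ : Function.Injective φ := by
          intro y z hyz
          have e1 : u⁻¹ * y * u * (y : G)⁻¹ = u⁻¹ * z * u * (z : G)⁻¹ := congrArg Subtype.val hyz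
          by_contra hne
          apply hu
          refine hC ((z : G)⁻¹ * y) (D.mul_mem (D.inv_mem z.2) y.2) ?_ u ?_
          · intro h1
            exact hne (Subtype.ext (inv_mul_eq_one.1 h1).symm)
          · have e3 : (y : G) * (z : G)⁻¹ = (z : G)⁻¹ * y := hDab _ y.2 _ (D.inv_mem z.2)
            show u * ((z : G)⁻¹ * y) = (z : G)⁻¹ * y * u
            have e2 : (z : G)⁻¹ * y * u = u * ((z : G)⁻¹ * y) := by
              calc (z : G)⁻¹ * y * u
                  = (z : G)⁻¹ * u * (u⁻¹ * y * u * (y : G)⁻¹) * y := by group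
                _ = u * ((z : G)⁻¹ * y) := by rw [e1]; group
            exact e2.symm
        obtain ⟨y, hy⟩ := Finite.surjective_of_injective hφ ⟨u⁻¹ * g', hx⟩
        have hy' : u⁻¹ * y * u * (y : G)⁻¹ = u⁻¹ * g' := congrArg Subtype.val hy
        refine isConj_iff.2 ⟨y, ?_⟩
        have := congrArg (u * ·) hy'
        simpa [mul_assoc] using this
    · intro c
      obtain ⟨x, rfl⟩ := ConjClasses.exists_rep c
      obtain ⟨g, rfl⟩ := QuotientGroup.mk'_surjective D x
      by_cases hg : g ∈ D
      · refine ⟨⟨ConjClasses.mk 1, (hreg 1).2 (by simpa using hp.one_lt.ne')⟩, ?_⟩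
        show ConjClasses.mk (QuotientGroup.mk' D 1) = _
        rw [map_one, (QuotientGroup.eq_one_iff g).2 hg |> fun h => (show QuotientGroup.mk' D g = 1 from h)]
      · exact ⟨⟨ConjClasses.mk g, (hreg g).2 (fun h => hg (hsD g h))⟩, rfl⟩
  have hcyc : ¬ IsCyclic D ∨ Nat.card (G ⧸ D) = 3 := by
    by_cases hc : IsCyclic D
    · right
      let _ : CommGroup (G ⧸ D) :=
        { (inferInstance : Group (G ⧸ D)) with mul_comm := aux_comm D hC hDbot }
      rw [← hq3]
      exact Nat.card_congr ConjClasses.mkEquiv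
    · exact Or.inl hc
  have hn3 : Nat.card (G ⧸ D) = 3 := by
    rcases aux_three_s10 hq3 with h | h | h
    · exact h
    · rcases hcyc with h' | h'
      · have : Fact (Nat.Prime 5) := ⟨by norm_num⟩
        exact absurd (isCyclic_of_prime_card (p := 5) (by rw [hcard, h])) h'
      · exact h'
    · rcases hcyc with h' | h'
      · have : Fact (Nat.Prime 7) := ⟨by norm_num⟩
        exact absurd (isCyclic_of_prime_card (p := 7) (by rw [hcard, h])) h'
      · exact h'
  have hD4 : Nat.card D = 4 := by rw [hcard, hn3]
  have hp2 : p = 2 := by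
    obtain ⟨k, hk⟩ := IsPGroup.iff_card.1 hDpgrp
    have h2 : 2 ∣ p ^ k := by rw [← hk, hD4]; norm_num
    exact ((Nat.prime_dvd_prime_iff_eq Nat.prime_two hp).1
      (Nat.prime_two.dvd_of_dvd_pow h2)).symm
  subst hp2
  refine ⟨rfl, aux_A4 ?_ hOp'⟩
  rw [Subgroup.card_eq_card_quotient_mul_card_subgroup D, hn3, hD4]
end

section
/- Let p be a prime and G a finite group with a normal Sylow p-subgroup D such that every nontrivial normal subgroup of G has order divisible by p (i.e. O_{p'}(G) = 1). If G has exactly 4 conjugacy classes and exactly 2 conjugacy classes consisting of p-regular elements, then G is isomorphic to the dihedral group of order 10 (in particular p = 5 and |D| = 5). -/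
theorem aux_dvd_s11 {G : Type*} [Group G] [Finite G] (D : Subgroup G) (hD : D.Normal) (x : G)
    (hx : x ∈ D) (hx1 : x ≠ 1) (h : ∀ y ∈ D, y ≠ 1 → IsConj x y) :
    Nat.card D - 1 ∣ Nat.card G := by
  have h1 : MulAction.orbit (ConjAct G) x = (D : Set G) \ {1} := by
    ext y
    rw [ConjAct.mem_orbit_conjAct]
    constructor
    · intro hy
      obtain ⟨c, rfl⟩ := isConj_iff.1 hy.symm
      refine ⟨hD.conj_mem _ hx c, ?_⟩
      simpa using hx1
    · rintro ⟨hy, hy1⟩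
      exact (h y hy hy1).symm
  have h2 := MulAction.index_stabilizer (ConjAct G) x
  have h3 := (MulAction.stabilizer (ConjAct G) x).index_dvd_card
  rw [h2, h1, Set.ncard_sdiff_singleton_of_mem D.one_mem] at h3
  exact h3

theorem aux_reg {p : ℕ} {G : Type*} [Group G] [Finite G] (hp : p.Prime)
    (hl : Nat.card {c : ConjClasses G // ∀ g ∈ c.carrier, ¬ p ∣ orderOf g} = 2) :
    ∃ s : G, s ≠ 1 ∧ (¬ p ∣ orderOf s) ∧ ∀ g : G, g ≠ 1 → ¬ p ∣ orderOf g → IsConj s g := by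
  have key : ∀ g : G, ¬ p ∣ orderOf g → ∀ a ∈ (ConjClasses.mk g).carrier, ¬ p ∣ orderOf a := by
    intro g hg a ha
    rw [ConjClasses.mem_carrier_iff_mk_eq, ConjClasses.mk_eq_mk_iff_isConj] at ha
    obtain ⟨c, rfl⟩ := isConj_iff.1 ha.symm
    have : orderOf (c * g * c⁻¹) = orderOf g := by
      have := orderOf_injective (MulAut.conj c).toMonoidHom (MulAut.conj c).injective g
      simpa using this
    rwa [this]
  have k1 : ¬ p ∣ orderOf (1 : G) := by simpa using hp.ne_one
  rw [Nat.card_eq_two_iff' ⟨ConjClasses.mk 1, key 1 k1⟩] at hl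
  obtain ⟨⟨c, hc⟩, hne, huniq⟩ := hl
  induction c using Quotient.inductionOn with | _ s =>
  refine ⟨s, ?_, hc s ?_, ?_⟩
  · rintro rfl
    exact hne rfl
  · exact ConjClasses.mem_carrier_mk
  · intro g hg hpg
    have := huniq ⟨ConjClasses.mk g, key g hpg⟩ (by
      intro h
      have h := congrArg Subtype.val h
      simp only [ConjClasses.mk_eq_mk_iff_isConj] at h
      exact hg (isConj_one_right.1 h.symm))
    have h := congrArg Subtype.val this
    exact (ConjClasses.mk_eq_mk_iff_isConj.1 h).symm

theorem aux_lift {p : ℕ} (hp : p.Prime) {G : Type*} [Group G] [Finite G]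
    (D : Subgroup G) (hDn : D.Normal) (hDpgrp : IsPGroup p D) (hDsyl : ¬ p ∣ D.index)
    (q : G ⧸ D) : ∃ g : G, (g : G ⧸ D) = q ∧ g ^ D.index = 1 := by
  have := Fact.mk hp
  obtain ⟨g, rfl⟩ := QuotientGroup.mk_surjective q
  obtain ⟨n, hn⟩ := IsPGroup.iff_card.1 hDpgrp
  have hco : Nat.Coprime (Nat.card D) D.index := by
    rw [hn]; exact Nat.Coprime.pow_left _ ((Nat.Prime.coprime_iff_not_dvd hp).2 hDsyl)
  obtain ⟨k, hk1, hk2⟩ := Nat.chineseRemainder hco 0 1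
  obtain ⟨a, ha⟩ := (Nat.modEq_zero_iff_dvd).1 hk1
  refine ⟨g ^ k, ?_, ?_⟩
  · have h1 : (g : G ⧸ D) ^ D.index = 1 := by
      rw [Subgroup.index]; exact pow_card_eq_one'
    have : (g : G ⧸ D) ^ k = (g : G ⧸ D) ^ 1 := by
      rw [pow_eq_pow_iff_modEq]
      exact hk2.of_dvd (orderOf_dvd_of_pow_eq_one h1)
    simpa using this
  · rw [← pow_mul, ha, mul_right_comm, D.card_mul_index, pow_mul, pow_card_eq_one', one_pow]

theorem aux_index {p : ℕ} (hp : p.Prime) {G : Type*} [Group G] [Finite G]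
    (D : Subgroup G) (hDn : D.Normal) (hDpgrp : IsPGroup p D) (hDsyl : ¬ p ∣ D.index)
    (hl : Nat.card {c : ConjClasses G // ∀ g ∈ c.carrier, ¬ p ∣ orderOf g} = 2) :
    D.index = 2 := by
  obtain ⟨s, hs1, hsp, hs⟩ := aux_reg hp hl
  have hsD : s ∉ D := by
    intro h
    obtain ⟨k, hk⟩ := hDpgrp ⟨s, h⟩
    have hk : s ^ p ^ k = 1 := by simpa [Subtype.ext_iff] using hk
    have h1 := orderOf_dvd_of_pow_eq_one hk
    have h2 : Nat.Coprime (orderOf s) (p ^ k) :=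
      Nat.Coprime.pow_right _ ((Nat.Prime.coprime_iff_not_dvd hp).2 hsp).symm
    exact hs1 (orderOf_eq_one_iff.1 (Nat.Coprime.eq_one_of_dvd h2 h1))
  have h := aux_dvd_s11 (G := G ⧸ D) ⊤ inferInstance (s : G ⧸ D) trivial
    (by rwa [Ne, QuotientGroup.eq_one_iff]) (by
      intro y _ hy
      obtain ⟨g, rfl, hg⟩ := aux_lift hp D hDn hDpgrp hDsyl y
      have hg1 : g ≠ 1 := by rintro rfl; exact hy rfl
      have hc := hs g hg1 (fun h => hDsyl (h.trans (orderOf_dvd_of_pow_eq_one hg)))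
      exact (QuotientGroup.mk' D).map_isConj hc)
  rw [Subgroup.card_top, ← Subgroup.index] at h
  have h1 : D.index ≠ 1 := by
    intro h1
    rw [Subgroup.index_eq_one] at h1
    exact hsD (h1 ▸ trivial)
  have h0 : D.index ≠ 0 := Subgroup.index_ne_zero_of_finite
  have h2 : D.index - 1 ∣ 1 := by
    have := Nat.dvd_sub h (dvd_refl (D.index - 1))
    rwa [show D.index - (D.index - 1) = 1 by omega] at this
  have := Nat.dvd_one.1 h2
  omega

theorem aux_four {G : Type*} [Group G] [Finite G] (hk : Nat.card (ConjClasses G) = 4)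
    (a b c d : G) (hab : ¬ IsConj a b) (hac : ¬ IsConj a c) (had : ¬ IsConj a d)
    (hbc : ¬ IsConj b c) (hbd : ¬ IsConj b d) (hcd : ¬ IsConj c d) (g : G) :
    IsConj g a ∨ IsConj g b ∨ IsConj g c ∨ IsConj g d := by
  classical
  have := Fintype.ofFinite (ConjClasses G)
  rw [Nat.card_eq_fintype_card] at hk
  have h : ({ConjClasses.mk a, ConjClasses.mk b, ConjClasses.mk c, ConjClasses.mk d} :
      Finset (ConjClasses G)).card = Fintype.card (ConjClasses G) := by
    rw [hk]
    simp only [← ConjClasses.mk_eq_mk_iff_isConj] at *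
    simp [*]
  rw [Finset.card_eq_iff_eq_univ] at h
  have := Finset.mem_univ (ConjClasses.mk g)
  rw [← h] at this
  simpa [ConjClasses.mk_eq_mk_iff_isConj] using this

theorem aux_three_s11 {G : Type*} [Group G] [Finite G] (hk : Nat.card (ConjClasses G) = 4)
    (a b c : G) (h : ∀ g : G, IsConj g a ∨ IsConj g b ∨ IsConj g c) : False := by
  classical
  have := Fintype.ofFinite (ConjClasses G)
  rw [Nat.card_eq_fintype_card, ← Finset.card_univ] at hk
  have h1 : (Finset.univ : Finset (ConjClasses G)) ⊆
      {ConjClasses.mk a, ConjClasses.mk b, ConjClasses.mk c} := by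
    intro q _
    induction q using Quotient.inductionOn with | _ g =>
    have := h g
    simp only [← ConjClasses.mk_eq_mk_iff_isConj] at this
    change ConjClasses.mk g ∈ _
    simp only [Finset.mem_insert, Finset.mem_singleton]
    exact this
  have h2 := Finset.card_le_card h1
  have h3 := Finset.card_le_three (a := ConjClasses.mk a) (b := ConjClasses.mk b)
    (c := ConjClasses.mk c)
  omega

theorem aux_dihedral {G : Type*} [Group G] [Finite G] (D : Subgroup G) (hc : Nat.card D = 5)
    (hi : D.index = 2) (t : G) (htD : t ∉ D) (ht : t * t = 1)
    (hinv : ∀ x ∈ D, t * x * t = x⁻¹) : Nonempty (G ≃* DihedralGroup 5) := by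
  have : Fact (Nat.Prime 5) := ⟨by norm_num⟩
  have hcyc : IsCyclic D := isCyclic_of_prime_card hc
  have e0 : Multiplicative (ZMod 5) ≃* D := by
    have := zmodCyclicMulEquiv hcyc
    rwa [hc] at this
  let f : ZMod 5 → G := fun i => e0 (Multiplicative.ofAdd i)
  have hfD : ∀ i, f i ∈ D := fun i => (e0 (Multiplicative.ofAdd i)).2
  have hfadd : ∀ i j, f (i + j) = f i * f j := by
    intro i j; simp [f, ofAdd_add]
  have hfneg : ∀ i, f (-i) = (f i)⁻¹ := by
    intro i; simp [f, ofAdd_neg]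
  have hfinj : Function.Injective f := by
    intro i j h
    simpa [f] using h
  have hft : ∀ i, f i * t = t * f (-i) := by
    intro i
    rw [hfneg, ← hinv _ (hfD i), ← mul_assoc, ← mul_assoc, ht, one_mul]
  let φ : DihedralGroup 5 →* G := MonoidHom.mk' (fun
    | .r i => f i
    | .sr i => t * f i) (by
      rintro (i | i) (j | j)
      · simp [hfadd]
      · simp only [DihedralGroup.r_mul_sr]
        rw [← mul_assoc, hft, mul_assoc, ← hfadd, sub_eq_neg_add]
      · simp [hfadd, mul_assoc]
      · simp only [DihedralGroup.sr_mul_sr]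
        rw [mul_assoc, ← mul_assoc (f i), hft, mul_assoc, ← mul_assoc t t, ht, one_mul, ← hfadd,
          sub_eq_neg_add])
  have hr : ∀ i, φ (.r i) = f i := fun _ => rfl
  have hsr : ∀ i, φ (.sr i) = t * f i := fun _ => rfl
  have hno : ∀ i, t * f i ∉ D := fun i h => htD ((D.mul_mem_cancel_right (hfD i)).1 h)
  have hinj : Function.Injective φ := by
    rintro (i | i) (j | j) h
    · rw [hr, hr] at h; rw [hfinj h]
    · rw [hr, hsr] at h; exact absurd (h ▸ hfD i) (hno j)
    · rw [hr, hsr] at h; exact absurd (h ▸ hfD j) (hno i)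
    · rw [hsr, hsr] at h; rw [hfinj (mul_left_cancel h)]
  have hcard : Nat.card (DihedralGroup 5) = Nat.card G := by
    rw [DihedralGroup.nat_card, ← D.card_mul_index, hc, hi]
  have hbij : Function.Bijective φ := (Nat.bijective_iff_injective_and_card φ).2 ⟨hinj, hcard⟩
  exact ⟨(MulEquiv.ofBijective φ hbij).symm⟩

/-- If a finite group `G` has a normal Sylow `p`-subgroup `D`, `O_{p'}(G) = 1`, exactly `4`
conjugacy classes and exactly `2` conjugacy classes of `p`-regular elements, then
`p = 5`, `|D| = 5`, and `G` is isomorphic to the dihedral group of order `10`. -/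
theorem stmt_11 {p : ℕ} (hp : p.Prime) {G : Type*} [Group G] [Fintype G]
    (D : Subgroup G)
    (hDn : D.Normal)
    (hDpgrp : IsPGroup p D)
    (hDsyl : ¬ p ∣ D.index)
    (hOp' : ∀ N : Subgroup G, N.Normal → N ≠ ⊥ → p ∣ Nat.card N)
    (hk : Nat.card (ConjClasses G) = 4)
    (hl : Nat.card {c : ConjClasses G // ∀ g ∈ c.carrier, ¬ p ∣ orderOf g} = 2) :
    p = 5 ∧ Nat.card D = 5 ∧ Nonempty (G ≃* DihedralGroup 5) := by
  have := Fact.mk hp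
  have hi : D.index = 2 := aux_index hp D hDn hDpgrp hDsyl hl
  rw [hi] at hDsyl
  have hcG : Nat.card D * 2 = Nat.card G := by rw [← hi]; exact D.card_mul_index
  obtain ⟨n, hn⟩ := IsPGroup.iff_card.1 hDpgrp
  have hpodd : Odd p := hp.odd_of_ne_two (by rintro rfl; exact hDsyl (dvd_refl _))
  have hodd : Odd (Nat.card D) := by rw [hn]; exact hpodd.pow
  -- the involution
  obtain ⟨t, htD, ht⟩ : ∃ t : G, t ∉ D ∧ t * t = 1 := by
    have : ∃ g : G, g ∉ D := by
      by_contra! h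
      have : D = ⊤ := (Subgroup.eq_top_iff' D).2 h
      rw [this, Subgroup.index_top] at hi
      omega
    obtain ⟨g, hg⟩ := this
    obtain ⟨t, h1, h2⟩ := aux_lift hp D hDn hDpgrp (by rwa [hi]) (g : G ⧸ D)
    refine ⟨t, ?_, by rw [← pow_two, ← hi, h2]⟩
    rwa [← QuotientGroup.eq_one_iff, h1, QuotientGroup.eq_one_iff]
  have htinv : t⁻¹ = t := inv_eq_of_mul_eq_one_left ht
  have hmul : ∀ g : G, g ∉ D → t * g ∈ D := by
    intro g hg
    rw [Subgroup.mul_mem_iff_of_index_two hi]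
    simp [htD, hg]
  have hsq : ∀ x ∈ D, x * x = 1 → x = 1 := by
    intro x hx h
    have h1 : orderOf x ∣ 2 := orderOf_dvd_of_pow_eq_one (by rw [pow_two, h])
    have h2 : orderOf x ∣ Nat.card D := Subgroup.orderOf_dvd_natCard D hx
    have h3 : Nat.Coprime 2 (Nat.card D) := (Nat.coprime_two_left).2 hodd
    exact orderOf_eq_one_iff.1 (Nat.eq_one_of_dvd_coprimes h3 h1 h2)
  -- D nontrivial
  obtain ⟨x, hx, hx1⟩ : ∃ x ∈ D, x ≠ 1 := by
    by_contra! h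
    refine aux_three_s11 hk 1 t t ?_
    intro g
    by_cases hg : g ∈ D
    · left; rw [h g hg]
    · right; left
      have := h _ (hmul g hg)
      rw [eq_inv_of_mul_eq_one_right this, htinv]
  have hxx : ∀ y ∈ D, y ≠ 1 → y ≠ y⁻¹ := by
    intro y hy hy1 h
    exact hy1 (hsq y hy (by nth_rw 2 [h]; simp))
  have hnt : ∀ y ∈ D, ∀ g, g ∉ D → ¬ IsConj y g := by
    intro y hy g hg h
    obtain ⟨c, rfl⟩ := isConj_iff.1 h
    exact hg (hDn.conj_mem _ hy c)
  have hpD : p ∣ Nat.card D := by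
    rw [hn]
    refine dvd_pow_self p ?_
    rintro rfl
    rw [pow_zero, Subgroup.card_eq_one] at hn
    rw [hn] at hx
    exact hx1 (Subgroup.mem_bot.1 hx)
  have hD1 : Nat.card D ≠ 1 := by
    intro h; rw [h] at hpD; exact hp.ne_one (Nat.dvd_one.1 hpD)
  have hmain : (Nat.card D = 3 ∨ Nat.card D = 5) ∧ ∀ y ∈ D, t * y * t = y⁻¹ := by
    by_cases hb : ∃ y ∈ D, y ≠ 1 ∧ ¬ IsConj x y
    · obtain ⟨y, hy, hy1, hxy⟩ := hb
      have hone : ∀ z : G, z ≠ 1 → ¬ IsConj 1 z := fun z hz h => hz (isConj_one_right.1 h)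
      have hall := aux_four hk 1 t x y (hnt 1 D.one_mem t htD) (hone x hx1) (hone y hy1)
        (fun h => hnt x hx t htD h.symm) (fun h => hnt y hy t htD h.symm) hxy
      have hinv : ∀ y ∈ D, t * y * t = y⁻¹ := by
        intro z hz
        have hz' : t * z ∉ D := fun h => htD ((D.mul_mem_cancel_right hz).1 h)
        have hc : IsConj t (t * z) := by
          rcases hall (t * z) with h | h | h | h
          · exact absurd h.symm (hnt 1 D.one_mem _ hz')
          · exact h.symm
          · exact absurd h.symm (hnt x hx _ hz')
          · exact absurd h.symm (hnt y hy _ hz')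
        obtain ⟨c, hc⟩ := isConj_iff.1 hc
        have : (t * z) * (t * z) = 1 := by
          rw [← hc]
          calc c * t * c⁻¹ * (c * t * c⁻¹) = c * (t * t) * c⁻¹ := by group
            _ = 1 := by rw [ht]; group
        rw [← mul_assoc] at this
        exact eq_inv_of_mul_eq_one_left this
      have hcomm : ∀ a ∈ D, ∀ b ∈ D, a * b = b * a := by
        intro a ha b hb
        have h1 := hinv _ (D.mul_mem ha hb)
        have h2 : t * (a * b) * t = (t * a * t) * (t * b * t) := by
          calc t * (a * b) * t = t * a * 1 * b * t := by group
            _ = t * a * (t * t) * b * t := by rw [ht]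
            _ = _ := by group
        rw [h2, hinv a ha, hinv b hb, ← mul_inv_rev] at h1
        exact (inv_injective h1).symm
      have hcl : ∀ a ∈ D, ∀ b, IsConj a b → b = a ∨ b = a⁻¹ := by
        intro a ha b hab
        obtain ⟨c, rfl⟩ := isConj_iff.1 hab
        by_cases hc : c ∈ D
        · left; rw [hcomm c hc a ha]; group
        · right
          have h1 := hmul c hc
          have h2 : c = t * (t * c) := by rw [← mul_assoc, ht, one_mul]
          have h3 := hcomm _ h1 a ha
          rw [← hinv a ha]
          calc c * a * c⁻¹ = (t * t) * (c * a * c⁻¹) := by rw [ht, one_mul]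
            _ = t * ((t * c) * a) * (t * c)⁻¹ * t := by group
            _ = t * a * t := by rw [h3]; group
      refine ⟨?_, hinv⟩
      classical
      have hsub : (D : Set G) ⊆ (({1, x, x⁻¹, y, y⁻¹} : Finset G) : Set G) := by
        intro z hz
        rcases hall z with h | h | h | h
        · simp [isConj_one_right.1 h.symm]
        · exact absurd h (hnt z hz t htD)
        · rcases hcl x hx z h.symm with h | h <;> simp [h]
        · rcases hcl y hy z h.symm with h | h <;> simp [h]
      have h1 := Set.ncard_le_ncard hsub (Finset.finite_toSet _)
      rw [Set.ncard_coe_finset] at h1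
      have h2 := Finset.card_le_five (a := (1 : G)) (b := x) (c := x⁻¹) (d := y) (e := y⁻¹)
      have h3 : (D : Set G).ncard = Nat.card D := rfl
      obtain ⟨k, hk⟩ := hodd
      omega
    · push Not at hb
      have h1 := aux_dvd_s11 D hDn x hx hx1 hb
      have h3 : Nat.card D = 3 := by
        rw [← hcG] at h1
        have hpos : 0 < Nat.card D := Nat.card_pos
        have h2 := Nat.dvd_sub h1 (dvd_mul_right (Nat.card D - 1) 2)
        rw [show Nat.card D * 2 - (Nat.card D - 1) * 2 = 2 by omega] at h2
        have := Nat.le_of_dvd (by norm_num) h2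
        obtain ⟨k, hk⟩ := hodd
        omega
      refine ⟨Or.inl h3, ?_⟩
      have : Fact (Nat.Prime 3) := ⟨by norm_num⟩
      have hcyc : IsCyclic D := isCyclic_of_prime_card h3
      have hcomm : ∀ a ∈ D, ∀ b ∈ D, a * b = b * a := by
        intro a ha b hb
        have := hcyc.isMulCommutative.is_comm.comm (⟨a, ha⟩ : D) ⟨b, hb⟩
        simpa [Subtype.ext_iff] using this
      intro y hy
      by_cases hy1 : y = 1
      · simp [hy1, ht]
      have hcj : IsConj y y⁻¹ := (hb y hy hy1).symm.trans (hb _ (D.inv_mem hy) (by simpa using hy1))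
      obtain ⟨c, hc⟩ := isConj_iff.1 hcj
      have hcD : c ∉ D := by
        intro h
        rw [hcomm c h y hy, mul_assoc, mul_inv_cancel, mul_one] at hc
        exact hxx y hy hy1 hc
      have h4 := hcomm _ (hmul c hcD) y hy
      rw [← hc]
      symm
      calc c * y * c⁻¹ = (t * t) * (c * y * c⁻¹) := by rw [ht, one_mul]
        _ = t * ((t * c) * y) * (t * c)⁻¹ * t := by group
        _ = t * y * t := by rw [h4]; group
  obtain ⟨h35, hinv⟩ := hmain
  have h5 : Nat.card D = 5 := by
    refine h35.resolve_left fun h3 => ?_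
    have hset : ({1, x, x⁻¹} : Set G) = D := by
      refine Set.eq_of_subset_of_ncard_le ?_ ?_ (Set.toFinite _)
      · rintro z (rfl | rfl | rfl)
        · exact D.one_mem
        · exact hx
        · exact D.inv_mem hx
      · have e1 : (D : Set G).ncard = 3 := h3
        rw [e1]
        rw [Set.ncard_eq_three.2 ⟨1, x, x⁻¹, hx1.symm, ?_, hxx x hx hx1, rfl⟩]
        simpa using hx1
    refine aux_three_s11 hk 1 x t ?_
    have hxc : IsConj x⁻¹ x := by
      refine IsConj.symm (isConj_iff.2 ⟨t, ?_⟩)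
      rw [htinv, hinv x hx]
    intro g
    by_cases hg : g ∈ D
    · have : g ∈ ({1, x, x⁻¹} : Set G) := by rw [hset]; exact hg
      rcases this with rfl | rfl | rfl
      · left; exact IsConj.refl _
      · right; left; exact IsConj.refl _
      · right; left; exact hxc
    · right; right
      have ha := hmul g hg
      have ha3 : (t * g) ^ 3 = 1 := by
        have h := orderOf_dvd_iff_pow_eq_one.1 (Subgroup.orderOf_dvd_natCard D ha)
        rwa [h3] at h
      have ha4 := hinv _ ha
      have hg1 : g = t * (t * g) := by rw [← mul_assoc, ht, one_mul]
      generalize t * g = a at *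
      subst hg1
      -- conjugate `t * a` by `a⁻¹`
      refine isConj_iff.2 ⟨a⁻¹, ?_⟩
      have h6 : a⁻¹ * t = t * a := by
        rw [← ha4, mul_assoc, ht, mul_one]
      calc a⁻¹ * (t * a) * a⁻¹⁻¹ = (a⁻¹ * t) * a * a := by group
        _ = t * a ^ 3 := by rw [h6]; simp only [pow_succ, pow_zero, one_mul, mul_assoc]
        _ = t := by rw [ha3, mul_one]
  refine ⟨?_, h5, aux_dihedral D h5 hi t htD ht hinv⟩
  rw [h5] at hpD
  exact (Nat.prime_dvd_prime_iff_eq hp (by norm_num)).1 hpD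
end

section
/- Let p be a prime, let D be a nontrivial finite abelian group whose order is a power of p, and let E be a finite group of order coprime to p acting on D by group automorphisms. If the action of E on D has exactly 3 orbits, then D is elementary abelian, i.e. every element of D has order dividing p. -/
/-- If a finite group `E` of order coprime to the prime `p` acts by automorphisms on a
nontrivial finite abelian `p`-group `D` with exactly `3` orbits, then `D` is elementary
abelian. -/
theorem stmt_12 {p : ℕ} (hp : p.Prime) {D : Type*} [CommGroup D] [Finite D] [Nontrivial D]
    (hDpgrp : IsPGroup p D)
    {E : Type*} [Group E] [Finite E] (hEp' : Nat.Coprime (Nat.card E) p)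
    (φ : E →* MulAut D)
    (horb : Nat.card {s : Set D | ∃ d : D, s = Set.range fun e : E => φ e d} = 3) :
    ∀ d : D, d ^ p = 1 := by
  by_contra! hcon
  obtain ⟨x, hx⟩ := hcon
  haveI : Fact p.Prime := ⟨hp⟩
  have hpD : p ∣ Nat.card D := by
    obtain ⟨n, hn, h⟩ := hDpgrp.nontrivial_iff_card.mp inferInstance
    rw [h]
    exact dvd_pow_self p hn.ne'
  obtain ⟨y, hy⟩ := exists_prime_orderOf_dvd_card' p hpD
  have hyp : y ^ p = 1 := by rw [← hy]; exact pow_orderOf_eq_one y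
  have hy1 : y ≠ 1 := by
    rintro rfl
    rw [orderOf_one] at hy
    exact hp.one_lt.ne hy
  set O : D → Set D := fun d => Set.range fun e : E => φ e d with hO
  have hself : ∀ d, d ∈ O d := fun d => ⟨1, by simp⟩
  have hpow : ∀ d z, z ∈ O d → (z ^ p = 1 ↔ d ^ p = 1) := by
    rintro d z ⟨e, rfl⟩
    simp only [← map_pow]
    exact map_eq_one_iff _ (φ e).injective
  have hone : ∀ d z, z ∈ O d → (z = 1 ↔ d = 1) := by
    rintro d z ⟨e, rfl⟩
    exact map_eq_one_iff _ (φ e).injective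
  have h1y : O 1 ≠ O y := fun h => hy1 ((hone 1 y (h ▸ hself y)).mpr rfl)
  have h1x : O 1 ≠ O x := fun h => hx ((hpow 1 x (h ▸ hself x)).mpr (one_pow p))
  have hyx : O y ≠ O x := fun h => hx ((hpow y x (h ▸ hself x)).mpr hyp)
  have hall : ({O 1, O y, O x} : Set (Set D)) = {s : Set D | ∃ d : D, s = O d} := by
    apply Set.eq_of_subset_of_ncard_le
    · rintro s (rfl | rfl | rfl) <;> exact ⟨_, rfl⟩
    · rw [Set.ncard_eq_three.mpr ⟨_, _, _, h1y, h1x, hyx, rfl⟩]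
      exact horb.le
    · exact Set.toFinite _
  set K : Subgroup D := (powMonoidHom p : D →* D).ker with hK
  have hmem : ∀ z, z ∈ K ↔ z ^ p = 1 := fun z => by simp [hK, MonoidHom.mem_ker]
  have hcompl : O x = (K : Set D)ᶜ := by
    ext z
    rw [Set.mem_compl_iff, SetLike.mem_coe, hmem]
    constructor
    · intro hz h
      exact hx ((hpow x z hz).mp h)
    · intro hz
      have : O z ∈ ({O 1, O y, O x} : Set (Set D)) := hall ▸ ⟨z, rfl⟩
      rcases this with h | h | h
      · exact absurd ((hpow 1 z (h ▸ hself z)).mpr (one_pow p)) hz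
      · exact absurd ((hpow y z (h ▸ hself z)).mpr hyp) hz
      · exact h ▸ hself z
  have hdvdE : (O x).ncard ∣ Nat.card E := by
    letI : MulAction E D := MulAction.compHom D φ
    have h := MulAction.index_stabilizer E x
    have h2 : (MulAction.orbit E x) = O x := rfl
    rw [← h2, ← h]
    exact Subgroup.index_dvd_card _
  have hpK : p ∣ (K : Set D).ncard := by
    have := Subgroup.orderOf_dvd_natCard K ((hmem y).mpr hyp)
    rwa [hy] at this
  have hpO : p ∣ (O x).ncard := by
    have := Set.ncard_add_ncard_compl (K : Set D)
    rw [← hcompl] at this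
    rw [← this] at hpD
    exact (Nat.dvd_add_right hpK).mp hpD
  have := Nat.dvd_gcd (hpO.trans hdvdE) (dvd_refl p)
  rw [hEp'] at this
  exact hp.one_lt.ne' (Nat.dvd_one.mp this)
end
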